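/- arXiv:1805.04795 — 7 statements merged into one kernel-verified Lean document; each statement's English description precedes it below -/
import Mathlib

section
/- Let E be a real topological vector space with topology τ and a solid cone C, and let e be an interior point of C. Then the set of interior points of C with respect to the topology generated by the norm ‖·‖_e coincides with the set of interior points of C with respect to τ. -/
open Filter Topology

/-- The Minkowski functional (gauge) of the order interval `[-e, e]`
determined by the cone `C`. -/
noncomputable def coneNorm {E : Type*} [AddCommGroup E] [Module ℝ E]
    (C : Set E) (e x : E) : ℝ :=
  gauge {z : E | z + e ∈ C ∧ e - z ∈ C} x

/-- The set of interior points of `C` with respect to the topology generated by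
the norm `coneNorm C e`: points around which a whole `coneNorm`-ball lies in `C`. -/
def normInterior {E : Type*} [AddCommGroup E] [Module ℝ E]
    (C : Set E) (e : E) : Set E :=
  {x : E | ∃ ε : ℝ, 0 < ε ∧ ∀ y : E, coneNorm C e (y - x) < ε → y ∈ C}

/-!
Both interiors admit the same description, in which no topology appears: `x` is interior to the
cone iff `x - t • e` lies in the cone for some `t > 0`. For the topology of `E`, moving by a small
multiple of `e` does not leave a neighbourhood, and conversely `x = (x - t • e) + t • e` with
`t • e` interior. For `‖·‖_e`, the points `x - t • e` have distance `t * ‖-e‖_e` from `x`, and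
conversely `‖y - x‖_e < t` gives `-t • e ⪯ y - x`, hence `x - t • e ⪯ y`.
-/

section Algebraic

variable {E : Type*} [AddCommGroup E] [Module ℝ E]

/-- The order interval `[-e, e]` of the relation `x ⪯ y ↔ y - x ∈ C`, whose gauge is `coneNorm C e`.
It is written out as in `coneNorm`, so that the two agree definitionally. -/
def orderInterval (C : Set E) (e : E) : Set E :=
  {z : E | z + e ∈ C ∧ e - z ∈ C}

lemma exists_pos_sub_smul_mem_of_mem_normInterior {C : Set E} {e x : E}
    (hx : x ∈ normInterior C e) : ∃ t : ℝ, 0 < t ∧ x - t • e ∈ C := by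
  obtain ⟨ε, hε, hball⟩ := hx
  obtain ⟨t, ht, hlt⟩ := exists_pos_mul_lt hε (coneNorm C e (-e))
  refine ⟨t, ht, hball _ ?_⟩
  calc coneNorm C e (x - t • e - x) = coneNorm C e (t • -e) := by
        rw [sub_sub_cancel_left, smul_neg]
    _ = coneNorm C e (-e) * t := by
        rw [coneNorm, gauge_smul_of_nonneg ht.le, smul_eq_mul, mul_comm, coneNorm]
    _ < ε := hlt

variable {C : ConvexCone ℝ E} {e : E}

lemma add_smul_mem_of_coneNorm_lt (habs : Absorbent ℝ (orderInterval (C : Set E) e)) {z : E}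
    {r : ℝ} (hz : coneNorm C e z < r) : z + r • e ∈ C := by
  obtain ⟨b, hb, hbr, w, hw, rfl⟩ := exists_lt_of_gauge_lt habs hz
  have he : e ∈ C := by simpa using habs.zero_mem.1
  have hsplit : b • w + r • e = b • (w + e) + (r - b) • e := by module
  exact hsplit ▸ C.add_mem (C.smul_mem hb hw.1) (C.smul_mem (sub_pos.2 hbr) he)

lemma mem_normInterior_iff_exists_sub_smul_mem
    (habs : Absorbent ℝ (orderInterval (C : Set E) e)) {x : E} :
    x ∈ normInterior C e ↔ ∃ t : ℝ, 0 < t ∧ x - t • e ∈ C := by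
  refine ⟨exists_pos_sub_smul_mem_of_mem_normInterior, ?_⟩
  rintro ⟨t, ht, hxt⟩
  refine ⟨t, ht, fun y hy ↦ ?_⟩
  have hy_eq : y = (x - t • e) + (y - x + t • e) := by abel
  exact hy_eq ▸ C.add_mem hxt (add_smul_mem_of_coneNorm_lt habs hy)

end Algebraic

section Topological

open scoped Pointwise

variable {E : Type*} [AddCommGroup E] [TopologicalSpace E]

lemma orderInterval_mem_nhds_zero [IsTopologicalAddGroup E] {s : Set E} {e : E} (hs : s ∈ 𝓝 e) :
    orderInterval s e ∈ 𝓝 0 := by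
  have hadd : Tendsto (fun z ↦ z + e) (𝓝 0) (𝓝 e) :=
    Continuous.tendsto' (by fun_prop) _ _ (zero_add e)
  have hsub : Tendsto (fun z ↦ e - z) (𝓝 0) (𝓝 e) :=
    Continuous.tendsto' (by fun_prop) _ _ (sub_zero e)
  exact inter_mem (hadd hs) (hsub hs)

variable [Module ℝ E] {C : ConvexCone ℝ E} {e : E}

lemma smul_mem_interior_of_pos [ContinuousConstSMul ℝ E] {t : ℝ} (ht : 0 < t)
    (he : e ∈ interior (C : Set E)) : t • e ∈ interior (C : Set E) := by
  have htC : t • (C : Set E) ⊆ C := Set.smul_set_subset_iff.2 fun _ ↦ C.smul_mem ht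
  exact interior_mono htC (interior_smul₀ ht.ne' (C : Set E) ▸ Set.smul_mem_smul_set he)

variable [IsTopologicalAddGroup E]

lemma add_mem_interior_of_mem_of_mem_interior {x y : E} (hx : x ∈ C)
    (hy : y ∈ interior (C : Set E)) : x + y ∈ interior (C : Set E) := by
  have hCC : (C : Set E) + C ⊆ C := Set.add_subset_iff.2 C.add_mem
  exact interior_mono hCC (subset_interior_add_right (Set.add_mem_add hx hy))

variable [ContinuousSMul ℝ E]

lemma exists_pos_sub_smul_mem_of_mem_nhds {s : Set E} {x : E} (hs : s ∈ 𝓝 x) (v : E) :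
    ∃ t : ℝ, 0 < t ∧ x - t • v ∈ s := by
  have hline : Tendsto (fun t : ℝ ↦ x - t • v) (𝓝 0) (𝓝 x) :=
    Continuous.tendsto' (by fun_prop) _ _ (by simp)
  have hpos : ∀ᶠ t : ℝ in 𝓝[>] 0, 0 < t := eventually_mem_nhdsWithin
  have hmem : ∀ᶠ t : ℝ in 𝓝[>] 0, x - t • v ∈ s :=
    (hline.mono_left nhdsWithin_le_nhds).eventually_mem hs
  exact (hpos.and hmem).exists

lemma mem_interior_iff_exists_sub_smul_mem (he : e ∈ interior (C : Set E)) {x : E} :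
    x ∈ interior (C : Set E) ↔ ∃ t : ℝ, 0 < t ∧ x - t • e ∈ C := by
  refine ⟨fun hx ↦ exists_pos_sub_smul_mem_of_mem_nhds (mem_interior_iff_mem_nhds.1 hx) e, ?_⟩
  rintro ⟨t, ht, hxt⟩
  simpa only [sub_add_cancel] using
    add_mem_interior_of_mem_of_mem_interior hxt (smul_mem_interior_of_pos ht he)

theorem stmt_5_general (C : ConvexCone ℝ E) {e : E} (he : e ∈ interior (C : Set E)) :
    normInterior C e = interior C := by
  have habs : Absorbent ℝ (orderInterval (C : Set E) e) :=
    absorbent_nhds_zero (orderInterval_mem_nhds_zero (mem_interior_iff_mem_nhds.1 he))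
  ext x
  rw [mem_normInterior_iff_exists_sub_smul_mem habs, mem_interior_iff_exists_sub_smul_mem he]

end Topological

theorem stmt_5 {E : Type*} [AddCommGroup E] [Module ℝ E] [TopologicalSpace E]
    [IsTopologicalAddGroup E] [ContinuousSMul ℝ E]
    (C : Set E) (hC_closed : IsClosed C) (hC_ne : C ≠ {0})
    (hC_add : ∀ x ∈ C, ∀ y ∈ C, x + y ∈ C)
    (hC_smul : ∀ r : ℝ, 0 ≤ r → ∀ x ∈ C, r • x ∈ C)
    (hC_pointed : C ∩ (-C) = {0})
    (e : E) (he : e ∈ interior C) :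
    normInterior C e = interior C := by
  exact stmt_5_general ⟨C, fun r hr ↦ hC_smul r hr.le, hC_add⟩ he
end

section
/- Let (E, ‖·‖) be a real normed space with a solid cone C that is normal with normal constant K (i.e., 0 ⪯ x ⪯ y implies ‖x‖ ≤ K‖y‖). Let {xₙ} be a sequence with xₙ ∈ C for all n, and suppose that for every c ∈ int C there exists n₀ such that c − xₙ ∈ int C for all n ≥ n₀. Then xₙ → 0 in norm. -/
open Filter Topology

/-!
Fix one interior point `c` of the cone. Every `r • c` with `r > 0` is again an interior point, so
eventually `0 ⪯ xₙ ⪯ r • c`, and normality bounds `‖xₙ‖` by `r * (K * ‖c‖)`, where `r` is arbitrary.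
-/

theorem smul_mem_interior_of_mapsTo {G₀ X : Type*} [GroupWithZero G₀] [MulAction G₀ X]
    [TopologicalSpace X] [ContinuousConstSMul G₀ X] {s : Set X} {r : G₀} (hr : r ≠ 0)
    (hs : Set.MapsTo (r • ·) s s) {x : X} (hx : x ∈ interior s) : r • x ∈ interior s :=
  (isOpenMap_smul₀ hr).mapsTo_interior hs hx

theorem tendsto_zero_of_forall_eventually_norm_le_mul {ι E : Type*} [SeminormedAddCommGroup E]
    {l : Filter ι} {f : ι → E} {M : ℝ} (hf : ∀ r > 0, ∀ᶠ i in l, ‖f i‖ ≤ r * M) :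
    Tendsto f l (𝓝 0) := by
  have f_littleO_const : f =o[l] fun _ ↦ M := .of_bound fun r hr ↦
    (hf r hr).mono fun _ hi ↦ hi.trans <| mul_le_mul_of_nonneg_left (Real.le_norm_self M) hr.le
  exact (Asymptotics.isLittleO_one_iff ℝ).1 <|
    f_littleO_const.trans_isBigO (Asymptotics.isBigO_const_const M one_ne_zero l)

section Normal

variable {ι E : Type*} [SeminormedAddCommGroup E] [NormedSpace ℝ E] {C : Set E} {K : ℝ}
  {l : Filter ι} {x : ι → E}

theorem tendsto_zero_of_forall_eventually_smul_sub_mem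
    (hK : ∀ x y : E, x ∈ C → y - x ∈ C → ‖x‖ ≤ K * ‖y‖) (hx : ∀ᶠ i in l, x i ∈ C) {c : E}
    (hc : ∀ r : ℝ, 0 < r → ∀ᶠ i in l, r • c - x i ∈ C) :
    Tendsto x l (𝓝 0) := by
  refine tendsto_zero_of_forall_eventually_norm_le_mul (M := K * ‖c‖) fun r hr ↦ ?_
  filter_upwards [hx, hc r hr] with i hxi hci
  calc ‖x i‖ ≤ K * ‖r • c‖ := hK _ _ hxi hci
    _ = r * (K * ‖c‖) := by rw [norm_smul_of_nonneg hr.le, mul_left_comm]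

theorem stmt_7_general (hC_smul : ∀ r : ℝ, 0 < r → ∀ x ∈ C, r • x ∈ C)
    (hSolid : (interior C).Nonempty)
    (hK : ∀ x y : E, x ∈ C → y - x ∈ C → ‖x‖ ≤ K * ‖y‖) (hx : ∀ᶠ i in l, x i ∈ C)
    (hcseq : ∀ c ∈ interior C, ∀ᶠ i in l, c - x i ∈ C) :
    Tendsto x l (𝓝 0) := by
  obtain ⟨c, hc⟩ := hSolid
  exact tendsto_zero_of_forall_eventually_smul_sub_mem hK hx fun r hr ↦
    hcseq (r • c) (smul_mem_interior_of_mapsTo hr.ne' (hC_smul r hr) hc)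

end Normal

theorem stmt_7 {E : Type*} [NormedAddCommGroup E] [NormedSpace ℝ E]
    (C : Set E) (hC_closed : IsClosed C) (hC_ne : C ≠ {0})
    (hC_add : ∀ x ∈ C, ∀ y ∈ C, x + y ∈ C)
    (hC_smul : ∀ r : ℝ, 0 ≤ r → ∀ x ∈ C, r • x ∈ C)
    (hC_pointed : C ∩ (-C) = {0})
    (hSolid : (interior C).Nonempty)
    (K : ℝ) (hK : ∀ x y : E, x ∈ C → y - x ∈ C → ‖x‖ ≤ K * ‖y‖)
    (x : ℕ → E) (hx : ∀ n, x n ∈ C)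
    (hcseq : ∀ c ∈ interior C, ∃ n₀ : ℕ, ∀ n ≥ n₀, c - x n ∈ interior C) :
    Tendsto x atTop (𝓝 0) := by
  exact stmt_7_general (fun r hr ↦ hC_smul r hr.le) hSolid hK (.of_forall hx) fun c hc ↦
    (eventually_atTop.2 (hcseq c hc)).mono fun _ hn ↦ interior_subset hn
end

section
/- Let (E, τ) be a real topological vector space ordered by a cone C that is solid and normal (i.e., there is a base of neighbourhoods of 0 consisting of order-convex sets). Then E is normable; more precisely, for any interior point e of C, the topology τ coincides with the topology generated by the norm ‖·‖_e, the Minkowski functional of [−e,e]. -/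
open Filter Topology

/-!
For `e` in the interior of `C`, the order interval `[-e, e]` is a neighbourhood of `0`. It is also
bounded: an order-convex neighbourhood `V` of `0` contains `±t e` for small `t > 0`, hence all of
`t [-e, e] ⊆ [-t e, t e]`. The gauge of a bounded neighbourhood of `0` induces the topology.
-/

section OrderInterval

variable {E : Type*} [AddCommGroup E]

/-- The order interval `[-e, e]` for the relation `x ⪯ y ↔ y - x ∈ C`. The relation is encoded by
`C` instead of an order instance on `E`. -/
def symmOrderInterval (C : Set E) (e : E) : Set E :=
  {z | z + e ∈ C ∧ e - z ∈ C}

/-- Order-convexity of `A` for the relation `x ⪯ y ↔ y - x ∈ C`; see `Set.OrdConnected` for the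
analogue with respect to an order instance. -/
def IsOrderConvex (C A : Set E) : Prop :=
  ∀ x ∈ A, ∀ y ∈ A, ∀ z : E, z - x ∈ C → y - z ∈ C → z ∈ A

/-- Normality of the cone `C`: the neighbourhoods of `0` have a base of order-convex sets. -/
def IsNormalCone [TopologicalSpace E] (C : Set E) : Prop :=
  ∀ U ∈ 𝓝 (0 : E), ∃ V ∈ 𝓝 (0 : E), V ⊆ U ∧ IsOrderConvex C V

variable {C A : Set E} {e z : E}

theorem neg_mem_symmOrderInterval (hz : z ∈ symmOrderInterval C e) :
    -z ∈ symmOrderInterval C e :=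
  ⟨by simpa only [neg_add_eq_sub] using hz.2, by simpa only [sub_neg_eq_add, add_comm] using hz.1⟩

theorem IsOrderConvex.symmOrderInterval_subset (hA : IsOrderConvex C A) (hneg : -e ∈ A)
    (he : e ∈ A) : symmOrderInterval C e ⊆ A := fun z hz ↦
  hA (-e) hneg e he z (by simpa only [sub_neg_eq_add] using hz.1) hz.2

theorem symmOrderInterval_mem_nhds_zero [TopologicalSpace E] [IsTopologicalAddGroup E]
    (he : e ∈ interior C) : symmOrderInterval C e ∈ 𝓝 0 := by
  have hC : C ∈ 𝓝 e := mem_interior_iff_mem_nhds.mp he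
  have hadd : Tendsto (fun z ↦ z + e) (𝓝 0) (𝓝 e) := by
    simpa only [zero_add] using (continuous_add_const e).tendsto 0
  have hsub : Tendsto (fun z ↦ e - z) (𝓝 0) (𝓝 e) := by
    simpa only [sub_zero] using (continuous_sub_left e).tendsto 0
  exact inter_mem (hadd hC) (hsub hC)

variable [Module ℝ E]

theorem smul_mem_symmOrderInterval_smul (hC : ∀ r : ℝ, 0 < r → ∀ x ∈ C, r • x ∈ C) {r : ℝ}
    (hr : 0 < r) (hz : z ∈ symmOrderInterval C e) : r • z ∈ symmOrderInterval C (r • e) :=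
  ⟨by simpa only [smul_add] using hC r hr _ hz.1, by simpa only [smul_sub] using hC r hr _ hz.2⟩

theorem smul_mem_symmOrderInterval_abs_smul (hC : ∀ r : ℝ, 0 < r → ∀ x ∈ C, r • x ∈ C) {c : ℝ}
    (hc : c ≠ 0) (hz : z ∈ symmOrderInterval C e) : c • z ∈ symmOrderInterval C (|c| • e) := by
  have habs := smul_mem_symmOrderInterval_smul hC (abs_pos.mpr hc) hz
  rcases abs_choice c with hpos | hneg
  · rwa [hpos] at habs ⊢
  · simpa only [hneg, neg_smul, neg_neg] using neg_mem_symmOrderInterval habs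

theorem IsNormalCone.isVonNBounded_symmOrderInterval [TopologicalSpace E] [ContinuousSMul ℝ E]
    (hNormal : IsNormalCone C) (hC : ∀ r : ℝ, 0 < r → ∀ x ∈ C, r • x ∈ C) (e : E) :
    Bornology.IsVonNBounded ℝ (symmOrderInterval C e) := by
  intro U hU
  obtain ⟨V, hV, hVU, hVconvex⟩ := hNormal U hU
  have htendsto (x : E) : Tendsto (fun c : ℝ ↦ |c| • x) (𝓝[≠] 0) (𝓝 0) := by
    have hcont : Continuous fun c : ℝ ↦ |c| • x := by fun_prop
    simpa only [abs_zero, zero_smul] using (hcont.tendsto 0).mono_left nhdsWithin_le_nhds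
  rw [absorbs_iff_eventually_nhdsNE_zero]
  filter_upwards [htendsto e hV, htendsto (-e) hV, self_mem_nhdsWithin]
    with c hpos hneg hc z hz
  rw [Set.mem_preimage, smul_neg] at hneg
  exact hVU (hVconvex.symmOrderInterval_subset hneg hpos
    (smul_mem_symmOrderInterval_abs_smul hC hc hz))

end OrderInterval

theorem hasBasis_nhds_gauge_sub_lt {E : Type*} [AddCommGroup E] [Module ℝ E] [TopologicalSpace E]
    [IsTopologicalAddGroup E] [ContinuousSMul ℝ E] {B : Set E}
    (hbounded : Bornology.IsVonNBounded ℝ B) (hB : B ∈ 𝓝 0) (x : E) :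
    (𝓝 x).HasBasis (fun ε : ℝ ↦ 0 < ε) fun ε ↦ {y | gauge B (y - x) < ε} := by
  rw [← nhds_translation_sub x, ← comap_gauge_nhds_zero hbounded hB, comap_comap]
  simpa only [Function.comp_apply, Set.preimage_ofPred_eq, abs_of_nonneg (gauge_nonneg _)] using
    (nhds_basis_zero_abs_lt ℝ).comap (gauge B ∘ (· - x))

theorem stmt_9_general {E : Type*} [AddCommGroup E] [Module ℝ E] [TopologicalSpace E]
    [IsTopologicalAddGroup E] [ContinuousSMul ℝ E] {C : Set E}
    (hC : ∀ r : ℝ, 0 < r → ∀ x ∈ C, r • x ∈ C) (hNormal : IsNormalCone C) {e : E}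
    (he : e ∈ interior C) (s : Set E) :
    IsOpen s ↔ ∀ x ∈ s, ∃ ε : ℝ, 0 < ε ∧ {y : E | coneNorm C e (y - x) < ε} ⊆ s := by
  have hbounded : Bornology.IsVonNBounded ℝ (symmOrderInterval C e) :=
    hNormal.isVonNBounded_symmOrderInterval hC e
  have hnhds : symmOrderInterval C e ∈ 𝓝 0 := symmOrderInterval_mem_nhds_zero he
  exact isOpen_iff_mem_nhds.trans <| forall₂_congr fun x _ ↦
    (hasBasis_nhds_gauge_sub_lt hbounded hnhds x).mem_iff

theorem stmt_9 {E : Type*} [AddCommGroup E] [Module ℝ E] [TopologicalSpace E]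
    [IsTopologicalAddGroup E] [ContinuousSMul ℝ E]
    (C : Set E) (hC_closed : IsClosed C) (hC_ne : C ≠ {0})
    (hC_add : ∀ x ∈ C, ∀ y ∈ C, x + y ∈ C)
    (hC_smul : ∀ r : ℝ, 0 ≤ r → ∀ x ∈ C, r • x ∈ C)
    (hC_pointed : C ∩ (-C) = {0})
    (hSolid : (interior C).Nonempty)
    -- normality: a base of neighbourhoods of 0 consisting of order-convex sets
    (hNormal : ∀ U ∈ 𝓝 (0 : E), ∃ V ∈ 𝓝 (0 : E), V ⊆ U ∧
      ∀ x ∈ V, ∀ y ∈ V, ∀ z : E, z - x ∈ C → y - z ∈ C → z ∈ V) :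
    ∀ e ∈ interior C, ∀ s : Set E,
      IsOpen s ↔ ∀ x ∈ s, ∃ ε : ℝ, 0 < ε ∧ {y : E | coneNorm C e (y - x) < ε} ⊆ s :=
  fun _ he s ↦ stmt_9_general (fun r hr ↦ hC_smul r hr.le) hNormal he s
end

section
/- Let X be a nonempty set, E a real topological vector space with a solid cone C, and d : X × X → E a cone metric, i.e.: d(x,y) ∈ C for all x, y; d(x,y) = 0 iff x = y; d(x,y) = d(y,x); and d(x,y) + d(y,z) − d(x,z) ∈ C for all x, y, z ∈ X. Then for any interior point e of C, the function D(x,y) = ‖d(x,y)‖_e, where ‖·‖_e is the Minkowski functional of [−e,e], is a metric on X. -/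
open Filter Topology

/-!
For `K` a convex cone and `r > 0`, `x ∈ r • [-e, e]` means `x + r • e ∈ K` and `r • e - x ∈ K`. The
interval `[-e, e]` is convex, and it is a neighbourhood of `0` when `e` is interior, so its gauge is
subadditive. It is moreover monotone on `K`, which turns the cone-valued triangle inequality into a
real one. If the gauge vanishes at `x`, then `±x + r • e ∈ K` for all `r > 0`; letting `r → 0` in
the closed cone `K` gives `±x ∈ K`, hence `x = 0` because `K` is salient.
-/

/-- The order interval `[-e, e]` of the relation `x ⪯ y ↔ y - x ∈ C`, in the form in which it
occurs in `coneNorm`. -/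
def coneInterval {E : Type*} [AddCommGroup E] (C : Set E) (e : E) : Set E :=
  {z : E | z + e ∈ C ∧ e - z ∈ C}

theorem coneInterval_eq_inter_neg {E : Type*} [AddCommGroup E] (C : Set E) (e : E) :
    coneInterval C e = (· + e) ⁻¹' C ∩ -((· + e) ⁻¹' C) := by
  ext z
  simp [coneInterval, neg_add_eq_sub]

section Algebraic

open scoped Pointwise

variable {E : Type*} [AddCommGroup E] [Module ℝ E] {K : ConvexCone ℝ E} {e x y : E} {r : ℝ}

theorem convex_coneInterval (K : ConvexCone ℝ E) (e : E) : Convex ℝ (coneInterval K e) := by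
  have hK : Convex ℝ ((· + e) ⁻¹' (K : Set E)) := K.convex.translate_preimage_left e
  rw [coneInterval_eq_inter_neg]
  exact hK.inter hK.neg

theorem mem_smul_coneInterval_iff (hr : 0 < r) :
    x ∈ r • coneInterval K e ↔ x + r • e ∈ K ∧ r • e - x ∈ K := by
  rw [Set.mem_smul_set_iff_inv_smul_mem₀ hr.ne']
  change r⁻¹ • x + e ∈ K ∧ e - r⁻¹ • x ∈ K ↔ _
  rw [← K.smul_mem_iff hr, ← K.smul_mem_iff hr (x := e - _), smul_add, smul_sub,
    smul_inv_smul₀ hr.ne']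

theorem mem_of_absorbent_coneInterval (habs : Absorbent ℝ (coneInterval K e)) : e ∈ K := by
  simpa using habs.zero_mem.1

theorem mem_smul_coneInterval_of_coneNorm_lt (habs : Absorbent ℝ (coneInterval K e))
    (h : coneNorm K e x < r) : x ∈ r • coneInterval K e := by
  obtain ⟨s, hs, hsr, hx⟩ := exists_lt_of_gauge_lt habs h
  obtain ⟨hadd, hsub⟩ := (mem_smul_coneInterval_iff hs).1 hx
  have hrest : (r - s) • e ∈ K :=
    K.smul_mem (sub_pos.2 hsr) (mem_of_absorbent_coneInterval habs)
  rw [mem_smul_coneInterval_iff (hs.trans hsr)]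
  constructor
  · convert K.add_mem hadd hrest using 1
    module
  · convert K.add_mem hsub hrest using 1
    module

theorem coneNorm_add_le (habs : Absorbent ℝ (coneInterval K e)) (x y : E) :
    coneNorm K e (x + y) ≤ coneNorm K e x + coneNorm K e y :=
  gauge_add_le (convex_coneInterval K e) habs x y

theorem coneNorm_le_coneNorm (habs : Absorbent ℝ (coneInterval K e)) (hx : x ∈ K)
    (hxy : y - x ∈ K) : coneNorm K e x ≤ coneNorm K e y := by
  refine le_of_forall_gt_imp_ge_of_dense fun r hyr ↦ ?_
  have hr : 0 < r := (gauge_nonneg y).trans_lt hyr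
  have hsub : r • e - y ∈ K :=
    ((mem_smul_coneInterval_iff hr).1 (mem_smul_coneInterval_of_coneNorm_lt habs hyr)).2
  refine gauge_le_of_mem hr.le ((mem_smul_coneInterval_iff hr).2 ⟨?_, ?_⟩)
  · exact K.add_mem hx (K.smul_mem hr (mem_of_absorbent_coneInterval habs))
  · simpa using K.add_mem hsub hxy

end Algebraic

section Topological

variable {E : Type*} [AddCommGroup E] [TopologicalSpace E]

theorem coneInterval_mem_nhds_zero [IsTopologicalAddGroup E] {C : Set E} {e : E}
    (he : e ∈ interior C) : coneInterval C e ∈ 𝓝 0 := by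
  have hC : (· + e) ⁻¹' C ∈ 𝓝 0 :=
    (continuous_add_const e).continuousAt.preimage_mem_nhds
      (by simpa using mem_interior_iff_mem_nhds.1 he)
  rw [coneInterval_eq_inter_neg]
  exact inter_mem hC (neg_mem_nhds_zero E hC)

variable [Module ℝ E] [ContinuousAdd E] [ContinuousSMul ℝ E]

theorem mem_of_isClosed_of_forall_add_smul_mem {C : Set E} (hC : IsClosed C) {x e : E}
    (h : ∀ r : ℝ, 0 < r → x + r • e ∈ C) : x ∈ C := by
  have hlim : Tendsto (fun r : ℝ ↦ x + r • e) (𝓝[>] 0) (𝓝 x) :=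
    tendsto_nhdsWithin_of_tendsto_nhds <|
      Continuous.tendsto' (by fun_prop) 0 x (by simp)
  exact hC.mem_of_tendsto hlim (eventually_nhdsWithin_of_forall h)

theorem coneNorm_eq_zero_iff {K : ConvexCone ℝ E} (hK : IsClosed (K : Set E)) (hsal : K.Salient)
    {e : E} (habs : Absorbent ℝ (coneInterval K e)) {x : E} : coneNorm K e x = 0 ↔ x = 0 := by
  refine ⟨fun hx ↦ ?_, fun hx ↦ hx ▸ gauge_zero⟩
  have hmem (r : ℝ) (hr : 0 < r) : x + r • e ∈ K ∧ r • e - x ∈ K :=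
    (mem_smul_coneInterval_iff hr).1 (mem_smul_coneInterval_of_coneNorm_lt habs (hx.trans_lt hr))
  have hpos : x ∈ K := mem_of_isClosed_of_forall_add_smul_mem hK fun r hr ↦ (hmem r hr).1
  have hneg : -x ∈ K := mem_of_isClosed_of_forall_add_smul_mem hK fun r hr ↦ by
    simpa only [SetLike.mem_coe, neg_add_eq_sub] using (hmem r hr).2
  by_contra hne
  exact hsal x hpos hne hneg

end Topological

theorem stmt_11 {X : Type*} [Nonempty X]
    {E : Type*} [AddCommGroup E] [Module ℝ E] [TopologicalSpace E]
    [IsTopologicalAddGroup E] [ContinuousSMul ℝ E]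
    (C : Set E) (hC_closed : IsClosed C) (hC_ne : C ≠ {0})
    (hC_add : ∀ x ∈ C, ∀ y ∈ C, x + y ∈ C)
    (hC_smul : ∀ r : ℝ, 0 ≤ r → ∀ x ∈ C, r • x ∈ C)
    (hC_pointed : C ∩ (-C) = {0})
    (hSolid : (interior C).Nonempty)
    (d : X → X → E)
    (hd_pos : ∀ x y : X, d x y ∈ C)
    (hd_eq : ∀ x y : X, d x y = 0 ↔ x = y)
    (hd_symm : ∀ x y : X, d x y = d y x)
    (hd_tri : ∀ x y z : X, d x y + d y z - d x z ∈ C)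
    (e : E) (he : e ∈ interior C) :
    (∀ x y : X, 0 ≤ coneNorm C e (d x y)) ∧
    (∀ x y : X, coneNorm C e (d x y) = 0 ↔ x = y) ∧
    (∀ x y : X, coneNorm C e (d x y) = coneNorm C e (d y x)) ∧
    (∀ x y z : X, coneNorm C e (d x z) ≤ coneNorm C e (d x y) + coneNorm C e (d y z)) := by
  let K : ConvexCone ℝ E :=
    { carrier := C
      smul_mem' := fun r hr x hx ↦ hC_smul r hr.le x hx
      add_mem' := fun x hx y hy ↦ hC_add x hx y hy }
  have hsal : K.Salient := fun x hx hne hneg ↦ hne (hC_pointed.subset ⟨hx, hneg⟩)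
  have habs : Absorbent ℝ (coneInterval K e) := absorbent_nhds_zero (coneInterval_mem_nhds_zero he)
  refine ⟨fun x y ↦ gauge_nonneg _, fun x y ↦ ?_, fun x y ↦ by rw [hd_symm], fun x y z ↦ ?_⟩
  · exact (coneNorm_eq_zero_iff (K := K) hC_closed hsal habs).trans (hd_eq x y)
  · calc coneNorm K e (d x z)
        ≤ coneNorm K e (d x y + d y z) := coneNorm_le_coneNorm habs (hd_pos x z) (hd_tri x y z)
      _ ≤ coneNorm K e (d x y) + coneNorm K e (d y z) := coneNorm_add_le habs _ _
end

section
/- Let (X,d) be a cone metric space over a real normed space (E,‖·‖) ordered by a solid cone C that is monotone (0 ⪯ x ⪯ y implies ‖x‖ ≤ ‖y‖). Then (X,d) is complete if and only if for every sequence of nonempty closed balls Bₙ = B[xₙ, cₙ] = {y ∈ X | d(y,xₙ) ⪯ cₙ} with Bₙ₊₁ ⊆ Bₙ for all n and cₙ → 0 in norm, there exists x ∈ X such that ⋂ₙ Bₙ = {x}. -/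
/-!
Since `B[y, b] ⊆ B[x, b + a]` whenever `d y x ⪯ a`, a Cauchy sequence has a subsequence whose
balls of radii `2⁻ⁿ • e`, with `e` interior to the cone, are nested; their common point is the
limit of the sequence. Conversely the centres of nested balls whose radii tend to zero form a
Cauchy sequence, and its limit is the only common point of the balls. The topology enters through
two facts: if `u` tends to `0` and `c` is interior to the cone, then `c - u` is eventually
interior, and a vector `v` belongs to the closed cone as soon as `v + c` does for all interior `c`.
-/

open Filter Topology

/-- Convergence of a sequence in a cone metric space. -/
def ConeConv {X E : Type*} [AddCommGroup E] [TopologicalSpace E]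
    (C : Set E) (d : X → X → E) (x : ℕ → X) (l : X) : Prop :=
  ∀ c ∈ interior C, ∃ n₀ : ℕ, ∀ n ≥ n₀, c - d (x n) l ∈ interior C

/-- Cauchyness of a sequence in a cone metric space. -/
def ConeCauchy {X E : Type*} [AddCommGroup E] [TopologicalSpace E]
    (C : Set E) (d : X → X → E) (x : ℕ → X) : Prop :=
  ∀ c ∈ interior C, ∃ n₀ : ℕ, ∀ m ≥ n₀, ∀ n ≥ n₀, c - d (x m) (x n) ∈ interior C

section Cone

variable {E : Type*} [AddCommGroup E] [TopologicalSpace E]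

theorem eventually_sub_mem_interior [IsTopologicalAddGroup E] {ι : Type*} {l : Filter ι} {s : Set E}
    {c : E} {u : ι → E} (hc : c ∈ interior s) (hu : Tendsto u l (𝓝 0)) :
    ∀ᶠ i in l, c - u i ∈ interior s := by
  have hlim : Tendsto (fun i ↦ c - u i) l (𝓝 c) := by simpa only [sub_zero] using hu.const_sub c
  exact hlim.eventually_mem (isOpen_interior.mem_nhds hc)

variable [Module ℝ E]

/-- A cone in the sense of cone metric spaces: closed, nontrivial and pointed. It is a predicate on
sets, and not a bundled `ProperCone`, to match `ConeConv` and `ConeCauchy`. -/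
structure IsCone (C : Set E) : Prop where
  isClosed : IsClosed C
  ne_singleton_zero : C ≠ {0}
  add_mem : ∀ x ∈ C, ∀ y ∈ C, x + y ∈ C
  smul_mem : ∀ r : ℝ, 0 ≤ r → ∀ x ∈ C, r • x ∈ C
  inter_neg : C ∩ (-C) = {0}

theorem tendsto_half_pow_smul [ContinuousSMul ℝ E] (v : E) :
    Tendsto (fun n : ℕ ↦ (1 / 2 : ℝ) ^ n • v) atTop (𝓝 0) := by
  have hpow : Tendsto (fun n : ℕ ↦ (1 / 2 : ℝ) ^ n) atTop (𝓝 0) :=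
    tendsto_pow_atTop_nhds_zero_of_lt_one (by norm_num) (by norm_num)
  simpa only [zero_smul] using hpow.smul_const v

namespace IsCone

variable {C : Set E} {c v : E}

theorem zero_mem (hC : IsCone C) : (0 : E) ∈ C :=
  (hC.inter_neg.ge rfl).1

theorem eq_zero_of_neg_mem (hC : IsCone C) (hv : v ∈ C) (hv' : -v ∈ C) : v = 0 :=
  hC.inter_neg.le ⟨hv, hv'⟩

open scoped Pointwise in
theorem add_mem_interior [IsTopologicalAddGroup E] (hC : IsCone C) (hc : c ∈ interior C)
    (hv : v ∈ C) : c + v ∈ interior C :=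
  interior_mono (Set.add_subset_iff.2 hC.add_mem) (subset_interior_add_left (Set.add_mem_add hc hv))

open scoped Pointwise in
theorem smul_mem_interior [ContinuousConstSMul ℝ E] (hC : IsCone C) {r : ℝ} (hr : 0 < r)
    (hc : c ∈ interior C) : r • c ∈ interior C := by
  have hsub : r • C ⊆ C := Set.smul_set_subset_iff.2 (hC.smul_mem r hr.le)
  apply interior_mono hsub
  rw [interior_smul₀ hr.ne']
  exact Set.smul_mem_smul_set hc

theorem zero_notMem_interior [ContinuousSMul ℝ E] (hC : IsCone C) : (0 : E) ∉ interior C := by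
  intro h0
  have hneg : ∀ v : E, -v ∈ C := fun v ↦ by
    obtain ⟨n, hn⟩ :=
      ((tendsto_half_pow_smul (-v)).eventually_mem (mem_interior_iff_mem_nhds.1 h0)).exists
    have hscaled := hC.smul_mem (2 ^ n) (by positivity) _ hn
    rwa [smul_smul, ← mul_pow, mul_one_div_cancel two_ne_zero, one_pow, one_smul] at hscaled
  exact hC.ne_singleton_zero <| Set.eq_singleton_iff_unique_mem.2
    ⟨hC.zero_mem, fun v hv ↦ hC.eq_zero_of_neg_mem hv (hneg v)⟩

theorem ne_zero_of_mem_interior [ContinuousSMul ℝ E] (hC : IsCone C) (hc : c ∈ interior C) :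
    c ≠ 0 := by
  rintro rfl
  exact hC.zero_notMem_interior hc

theorem mem_of_forall_add_mem [IsTopologicalAddGroup E] [ContinuousSMul ℝ E] (hC : IsCone C)
    (hsolid : (interior C).Nonempty) (hv : ∀ c ∈ interior C, v + c ∈ C) : v ∈ C := by
  obtain ⟨e, he⟩ := hsolid
  have hlim : Tendsto (fun n : ℕ ↦ v + (1 / 2 : ℝ) ^ n • e) atTop (𝓝 v) := by
    simpa only [add_zero] using (tendsto_half_pow_smul e).const_add v
  exact hC.isClosed.mem_of_tendsto hlim <| .of_forall fun n ↦
    hv _ (hC.smul_mem_interior (by positivity) he)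

end IsCone

end Cone

section ConeMetric

variable {X E : Type*} [AddCommGroup E]

/-- A cone metric: a distance with values in `E`, ordered by `a ⪯ b ↔ b - a ∈ C`. -/
structure IsConeMetric (C : Set E) (d : X → X → E) : Prop where
  nonneg : ∀ x y, d x y ∈ C
  eq_zero_iff : ∀ x y, d x y = 0 ↔ x = y
  symm : ∀ x y, d x y = d y x
  triangle : ∀ x y z, d x y + d y z - d x z ∈ C

/-- The closed ball with centre `x` and vector radius `c` in a cone metric space. -/
def coneClosedBall (C : Set E) (d : X → X → E) (x : X) (c : E) : Set X :=
  {y | c - d y x ∈ C}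

variable {C : Set E} {d : X → X → E} {x y z l : X} {a b : E} {u : ℕ → X} {c : ℕ → E}

theorem IsConeMetric.self_mem_coneClosedBall (hd : IsConeMetric C d) (ha : a ∈ C) :
    x ∈ coneClosedBall C d x a := by
  simpa only [coneClosedBall, Set.mem_ofPred_eq, (hd.eq_zero_iff x x).2 rfl, sub_zero] using ha

variable [TopologicalSpace E]

theorem ConeCauchy.exists_strictMono (hu : ConeCauchy C d u) (hc : ∀ n, c n ∈ interior C) :
    ∃ φ : ℕ → ℕ, StrictMono φ ∧ ∀ n, ∀ m ≥ φ n, c n - d (u m) (u (φ n)) ∈ interior C := by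
  refine extraction_forall_of_eventually'
    (P := fun n k ↦ ∀ m ≥ k, c n - d (u m) (u k) ∈ interior C) fun n ↦ ?_
  obtain ⟨N, hN⟩ := hu (c n) (hc n)
  exact ⟨N, fun k hk m hm ↦ hN m (hk.trans hm) k hk⟩

variable [Module ℝ E]

namespace IsConeMetric

theorem add_sub_mem (hd : IsConeMetric C d) (hC : IsCone C) (hxy : a - d x y ∈ C)
    (hyz : b - d y z ∈ C) : a + b - d x z ∈ C := by
  convert hC.add_mem _ (hC.add_mem _ hxy _ hyz) _ (hd.triangle x y z) using 1
  abel

theorem add_sub_mem_interior [IsTopologicalAddGroup E] (hd : IsConeMetric C d) (hC : IsCone C)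
    (hxy : a - d x y ∈ interior C) (hyz : b - d y z ∈ C) : a + b - d x z ∈ interior C := by
  convert hC.add_mem_interior (hC.add_mem_interior hxy hyz) (hd.triangle x y z) using 1
  abel

theorem coneClosedBall_subset (hd : IsConeMetric C d) (hC : IsCone C) (hyx : a - d y x ∈ C) :
    coneClosedBall C d y b ⊆ coneClosedBall C d x (b + a) :=
  fun _ hz ↦ hd.add_sub_mem hC hz hyx

theorem eq_of_forall_mem_coneClosedBall [IsTopologicalAddGroup E] (hd : IsConeMetric C d)
    (hC : IsCone C) (hc : Tendsto c atTop (𝓝 0)) (hy : ∀ n, y ∈ coneClosedBall C d (u n) (c n))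
    (hz : ∀ n, z ∈ coneClosedBall C d (u n) (c n)) : y = z := by
  have hlim : Tendsto (fun n ↦ c n + c n - d y z) atTop (𝓝 (-d y z)) := by
    simpa only [add_zero, zero_sub] using (hc.add hc).sub_const (d y z)
  have hneg : -d y z ∈ C := hC.isClosed.mem_of_tendsto hlim <| .of_forall fun n ↦
    hd.add_sub_mem hC (hy n) (hd.symm z (u n) ▸ hz n)
  exact (hd.eq_zero_iff y z).1 (hC.eq_zero_of_neg_mem (hd.nonneg y z) hneg)

theorem mem_coneClosedBall_of_coneConv [IsTopologicalAddGroup E] [ContinuousSMul ℝ E]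
    (hd : IsConeMetric C d) (hC : IsCone C) (hsolid : (interior C).Nonempty)
    (hl : ConeConv C d u l) (hu : ∃ᶠ n in atTop, u n ∈ coneClosedBall C d y a) :
    l ∈ coneClosedBall C d y a := by
  refine hC.mem_of_forall_add_mem hsolid fun e he ↦ ?_
  obtain ⟨N, hN⟩ := hl e he
  obtain ⟨n, hball, hn⟩ := (hu.and_eventually (eventually_ge_atTop N)).exists
  have hle : e + a - d l y ∈ C :=
    hd.add_sub_mem hC (hd.symm (u n) l ▸ interior_subset (hN n hn)) hball
  convert hle using 1
  abel

theorem coneCauchy_of_antitone_coneClosedBall [IsTopologicalAddGroup E] (hd : IsConeMetric C d)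
    (hC : IsCone C) (hcC : ∀ n, c n ∈ C) (hc : Tendsto c atTop (𝓝 0))
    (hanti : Antitone fun n ↦ coneClosedBall C d (u n) (c n)) : ConeCauchy C d u := by
  have hcentre : ∀ {n m}, n ≤ m → c n - d (u m) (u n) ∈ C := fun hnm ↦
    hanti hnm (hd.self_mem_coneClosedBall (hcC _))
  intro e he
  obtain ⟨N, hN⟩ := eventually_atTop.1 (eventually_sub_mem_interior he hc)
  have hsmall : ∀ n ≥ N, ∀ m ≥ n, e - d (u m) (u n) ∈ interior C := fun n hn m hnm ↦ by
    simpa only [sub_add_sub_cancel] using hC.add_mem_interior (hN n hn) (hcentre hnm)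
  refine ⟨N, fun m hm n hn ↦ ?_⟩
  rcases le_total n m with hnm | hmn
  · exact hsmall n hn m hnm
  · exact hd.symm (u m) (u n) ▸ hsmall m hm n hmn

theorem exists_iInter_coneClosedBall_eq_singleton [IsTopologicalAddGroup E] [ContinuousSMul ℝ E]
    (hd : IsConeMetric C d) (hC : IsCone C) (hsolid : (interior C).Nonempty)
    (hcomplete : ∀ x : ℕ → X, ConeCauchy C d x → ∃ l, ConeConv C d x l)
    (hcC : ∀ n, c n ∈ C) (hc : Tendsto c atTop (𝓝 0))
    (hanti : Antitone fun n ↦ coneClosedBall C d (u n) (c n)) :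
    ∃ z, ⋂ n, coneClosedBall C d (u n) (c n) = {z} := by
  obtain ⟨l, hl⟩ := hcomplete u (hd.coneCauchy_of_antitone_coneClosedBall hC hcC hc hanti)
  have hmem : ∀ n, l ∈ coneClosedBall C d (u n) (c n) := fun n ↦
    hd.mem_coneClosedBall_of_coneConv hC hsolid hl <| Eventually.frequently <|
      (eventually_ge_atTop n).mono fun m hnm ↦ hanti hnm (hd.self_mem_coneClosedBall (hcC m))
  exact ⟨l, Set.eq_singleton_iff_unique_mem.2 ⟨Set.mem_iInter.2 hmem, fun _ hy ↦
    hd.eq_of_forall_mem_coneClosedBall hC hc (Set.mem_iInter.1 hy) hmem⟩⟩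

theorem coneConv_of_forall_mem_coneClosedBall [IsTopologicalAddGroup E] (hd : IsConeMetric C d)
    (hC : IsCone C) (hc : Tendsto c atTop (𝓝 0)) (hz : ∀ n, z ∈ coneClosedBall C d (u n) (c n)) :
    ConeConv C d u z := by
  intro e he
  obtain ⟨N, hN⟩ := eventually_atTop.1 (eventually_sub_mem_interior he hc)
  refine ⟨N, fun n hn ↦ ?_⟩
  rw [hd.symm]
  simpa only [sub_add_sub_cancel] using hC.add_mem_interior (hN n hn) (hz n)

theorem coneConv_of_coneConv_comp [IsTopologicalAddGroup E] [ContinuousSMul ℝ E]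
    (hd : IsConeMetric C d) (hC : IsCone C) (hu : ConeCauchy C d u) {φ : ℕ → ℕ}
    (hφ : Tendsto φ atTop atTop) (hl : ConeConv C d (u ∘ φ) l) : ConeConv C d u l := by
  intro e he
  have hhalf : (1 / 2 : ℝ) • e ∈ interior C := hC.smul_mem_interior (by norm_num) he
  obtain ⟨N, hN⟩ := hu _ hhalf
  obtain ⟨K, hK⟩ := hl _ hhalf
  obtain ⟨k, hφk, hk⟩ := ((hφ.eventually_ge_atTop N).and (eventually_ge_atTop K)).exists
  refine ⟨N, fun n hn ↦ ?_⟩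
  have hlt := hd.add_sub_mem_interior hC (hN n hn (φ k) hφk) (interior_subset (hK k hk))
  rwa [← add_smul, add_halves, one_smul] at hlt

end IsConeMetric

theorem ConeCauchy.exists_antitone_coneClosedBall [IsTopologicalAddGroup E] [ContinuousSMul ℝ E]
    (hu : ConeCauchy C d u) (hd : IsConeMetric C d) (hC : IsCone C) (ha : a ∈ interior C) :
    ∃ φ : ℕ → ℕ, StrictMono φ ∧
      Antitone fun n ↦ coneClosedBall C d (u (φ n)) ((1 / 2 : ℝ) ^ n • a) := by
  obtain ⟨φ, hφ, hclose⟩ := hu.exists_strictMono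
    (c := fun n ↦ (1 / 2 : ℝ) ^ (n + 1) • a) fun n ↦ hC.smul_mem_interior (by positivity) ha
  refine ⟨φ, hφ, antitone_nat_of_succ_le fun n ↦ ?_⟩
  have hradius : (1 / 2 : ℝ) ^ n • a = (1 / 2 : ℝ) ^ (n + 1) • a + (1 / 2 : ℝ) ^ (n + 1) • a := by
    module
  rw [hradius]
  exact hd.coneClosedBall_subset hC (interior_subset (hclose n _ (hφ.monotone n.le_succ)))

theorem ConeCauchy.exists_coneConv [IsTopologicalAddGroup E] [ContinuousSMul ℝ E]
    (hu : ConeCauchy C d u) (hd : IsConeMetric C d) (hC : IsCone C)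
    (hsolid : (interior C).Nonempty)
    (hballs : ∀ (x : ℕ → X) (c : ℕ → E), (∀ n, c n ∈ interior C) → Tendsto c atTop (𝓝 0) →
      (Antitone fun n ↦ coneClosedBall C d (x n) (c n)) →
      (⋂ n, coneClosedBall C d (x n) (c n)).Nonempty) :
    ∃ l, ConeConv C d u l := by
  obtain ⟨e, he⟩ := hsolid
  obtain ⟨φ, hφ, hanti⟩ := hu.exists_antitone_coneClosedBall hd hC he
  have hradii := tendsto_half_pow_smul e
  obtain ⟨z, hz⟩ := hballs (u ∘ φ) (fun n ↦ (1 / 2 : ℝ) ^ n • e)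
    (fun n ↦ hC.smul_mem_interior (by positivity) he) hradii hanti
  have hsubseq : ConeConv C d (u ∘ φ) z :=
    hd.coneConv_of_forall_mem_coneClosedBall hC hradii (Set.mem_iInter.1 hz)
  exact ⟨z, hd.coneConv_of_coneConv_comp hC hu hφ.tendsto_atTop hsubseq⟩

theorem stmt_13_general [IsTopologicalAddGroup E] [ContinuousSMul ℝ E] (hC : IsCone C)
    (hsolid : (interior C).Nonempty) (hd : IsConeMetric C d) :
    (∀ x : ℕ → X, ConeCauchy C d x → ∃ l, ConeConv C d x l) ↔
      ∀ (x : ℕ → X) (c : ℕ → E), (∀ n, c n ∈ C ∧ c n ≠ 0) →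
        (∀ n, (coneClosedBall C d (x n) (c n)).Nonempty) →
        (∀ n, coneClosedBall C d (x (n + 1)) (c (n + 1)) ⊆ coneClosedBall C d (x n) (c n)) →
        Tendsto c atTop (𝓝 0) → ∃ z, ⋂ n, coneClosedBall C d (x n) (c n) = {z} := by
  constructor
  · intro hcomplete x c hcC _ hnest hc
    exact hd.exists_iInter_coneClosedBall_eq_singleton hC hsolid hcomplete (fun n ↦ (hcC n).1) hc
      (antitone_nat_of_succ_le hnest)
  · intro hballs u hu
    refine hu.exists_coneConv hd hC hsolid fun x c hc hlim hanti ↦ ?_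
    have hcC : ∀ n, c n ∈ C := fun n ↦ interior_subset (hc n)
    obtain ⟨z, hz⟩ := hballs x c (fun n ↦ ⟨hcC n, hC.ne_zero_of_mem_interior (hc n)⟩)
      (fun n ↦ ⟨x n, hd.self_mem_coneClosedBall (hcC n)⟩) (fun n ↦ hanti n.le_succ) hlim
    exact hz ▸ Set.singleton_nonempty z

end ConeMetric

theorem stmt_13 {X : Type*} [Nonempty X]
    {E : Type*} [NormedAddCommGroup E] [NormedSpace ℝ E]
    (C : Set E) (hC_closed : IsClosed C) (hC_ne : C ≠ {0})
    (hC_add : ∀ x ∈ C, ∀ y ∈ C, x + y ∈ C)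
    (hC_smul : ∀ r : ℝ, 0 ≤ r → ∀ x ∈ C, r • x ∈ C)
    (hC_pointed : C ∩ (-C) = {0})
    (hSolid : (interior C).Nonempty)
    (hMono : ∀ x y : E, x ∈ C → y - x ∈ C → ‖x‖ ≤ ‖y‖)
    (d : X → X → E)
    (hd_pos : ∀ x y : X, d x y ∈ C)
    (hd_eq : ∀ x y : X, d x y = 0 ↔ x = y)
    (hd_symm : ∀ x y : X, d x y = d y x)
    (hd_tri : ∀ x y z : X, d x y + d y z - d x z ∈ C) :
    -- `(X, d)` is complete
    (∀ x : ℕ → X, ConeCauchy C d x → ∃ l : X, ConeConv C d x l) ↔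
    -- iff every decreasing sequence of nonempty closed balls with radii tending
    -- to zero has intersection equal to a singleton
    (∀ (x : ℕ → X) (c : ℕ → E),
      (∀ n, c n ∈ C ∧ c n ≠ 0) →
      (∀ n, Set.Nonempty {y : X | c n - d y (x n) ∈ C}) →
      (∀ n, {y : X | c (n + 1) - d y (x (n + 1)) ∈ C} ⊆ {y : X | c n - d y (x n) ∈ C}) →
      Tendsto c atTop (𝓝 0) →
      ∃ z : X, (⋂ n, {y : X | c n - d y (x n) ∈ C}) = {z}) :=
  stmt_13_general ⟨hC_closed, hC_ne, hC_add, hC_smul, hC_pointed⟩ hSolid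
    ⟨hd_pos, hd_eq, hd_symm, hd_tri⟩
end

section
/- Let (X,d) be a cone metric space over a real topological vector space E with a solid cone C, and let f, g : X → X satisfy f(X) ⊆ g(X), with g(X) (or f(X)) complete as a subspace of (X,d). Suppose there exists λ ∈ (0,1) such that d(fx,fy) ⪯ λ·d(gx,gy) for all x, y ∈ X. Then f and g have a unique point of coincidence; moreover, if f and g are weakly compatible, then they have a unique common fixed point in X. -/
open Filter Topology

/-- A subset `S` of a cone metric space is complete if every Cauchy sequence with
values in `S` converges to a point of `S`. -/
def ConeSubsetComplete {X E : Type*} [AddCommGroup E] [TopologicalSpace E]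
    (C : Set E) (d : X → X → E) (S : Set X) : Prop :=
  ∀ x : ℕ → X, (∀ n, x n ∈ S) → ConeCauchy C d x → ∃ l ∈ S, ConeConv C d x l

/-! The cone induces a partial order for which `C = {v | 0 ≤ v}`. Choosing
`g (x (n + 1)) = f (x n)`, the sequence `y n = f (x n)` satisfies
`d (y (n + 1)) (y (n + 2)) ≤ lam • d (y n) (y (n + 1))`, so it is Cauchy and converges to some
`g u`. The contraction inequality bounds `d (y (n + 1)) (f u)` by `d (y n) (g u)`, so `y` also
converges to `f u`, whence `f u = g u`. Two points of coincidence `w`, `w'` satisfy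
`d w w' ≤ lam • d w w'` and so agree; under weak compatibility the common value of `f w` and `g w`
at a point of coincidence `w` is again a point of coincidence, hence equal to `w`. -/

open Set

section ConeOrder

variable {E : Type*} [AddCommGroup E] [TopologicalSpace E] [IsTopologicalAddGroup E]

theorem closedIciTopology_of_isClosed_Ici_zero [PartialOrder E] [IsOrderedAddMonoid E]
    (h : IsClosed (Ici (0 : E))) : ClosedIciTopology E where
  isClosed_Ici a := by
    have hpreimage : Ici a = (fun v => v - a) ⁻¹' Ici 0 := by
      ext v
      simp only [mem_Ici, mem_preimage, sub_nonneg]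
    rw [hpreimage]
    exact h.preimage (by fun_prop)

theorem exists_partialOrder_coe_eq_Ici_zero [Module ℝ E] (K : PointedCone ℝ E)
    (hclosed : IsClosed (K : Set E)) (hsalient : (K : ConvexCone ℝ E).Salient) :
    ∃ _ : PartialOrder E, IsOrderedAddMonoid E ∧ PosSMulMono ℝ E ∧ ClosedIciTopology E ∧
      (K : Set E) = Ici 0 := by
  have hpointed : (K : ConvexCone ℝ E).Pointed := K.zero_mem
  let := (K : ConvexCone ℝ E).toPartialOrder hpointed hsalient
  have := (K : ConvexCone ℝ E).to_isOrderedAddMonoid hpointed hsalient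
  have hIci : (K : Set E) = Ici 0 := by
    ext v
    change v ∈ K ↔ v - 0 ∈ K
    rw [sub_zero]
  refine ⟨inferInstance, inferInstance, .of_smul_nonneg fun r hr v hv => ?_,
    closedIciTopology_of_isClosed_Ici_zero (hIci ▸ hclosed), hIci⟩
  rw [← mem_Ici, ← hIci] at hv ⊢
  exact K.smul_mem hr hv

end ConeOrder

section OrderedModule

variable {E : Type*} [AddCommGroup E] [PartialOrder E] [Module ℝ E] [PosSMulMono ℝ E]

theorem eq_zero_of_le_smul_self [IsOrderedAddMonoid E] {v : E} {lam : ℝ} (hlam : lam < 1)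
    (hv : 0 ≤ v) (h : v ≤ lam • v) : v = 0 := by
  refine le_antisymm ?_ hv
  have hscaled : (1 - lam) • v ≤ (1 - lam) • 0 := by
    rwa [smul_zero, sub_smul, one_smul, sub_nonpos]
  exact le_of_smul_le_smul_left hscaled (sub_pos.2 hlam)

theorem le_pow_smul_of_succ_le_smul {a : ℕ → E} {lam : ℝ} (hlam : 0 ≤ lam)
    (hstep : ∀ n, a (n + 1) ≤ lam • a n) (n : ℕ) : a n ≤ lam ^ n • a 0 := by
  induction n with
  | zero => rw [pow_zero, one_smul]
  | succ n ih =>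
    calc a (n + 1)
        ≤ lam • a n := hstep n
      _ ≤ lam • lam ^ n • a 0 := by gcongr
      _ = lam ^ (n + 1) • a 0 := by rw [smul_smul, pow_succ']

variable [TopologicalSpace E] [ContinuousSMul ℝ E]

theorem smul_mem_interior_Ici_zero {r : ℝ} (hr : 0 < r) {c : E}
    (hc : c ∈ interior (Ici (0 : E))) : r • c ∈ interior (Ici (0 : E)) :=
  (isOpenMap_smul₀ hr.ne').mapsTo_interior (fun _ hv => smul_nonneg hr.le hv) hc

theorem nonpos_of_forall_mem_interior_Ici_zero_le [IsOrderedAddMonoid E]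
    [IsTopologicalAddGroup E] [ClosedIciTopology E]
    (hsolid : (interior (Ici (0 : E))).Nonempty) {v : E}
    (h : ∀ c ∈ interior (Ici (0 : E)), v ≤ c) : v ≤ 0 := by
  have hzero : (0 : E) ∈ closure (interior (Ici 0)) := by
    rw [(convex_Ici (𝕜 := ℝ) (0 : E)).closure_interior_eq_closure_of_nonempty_interior hsolid]
    exact subset_closure self_mem_Ici
  exact closure_minimal h isClosed_Ici hzero

end OrderedModule

/-- A cone metric whose cone is the positive cone `Set.Ici 0` of an ordered group. -/
structure IsConeMetric_s14 {X E : Type*} [AddCommGroup E] [PartialOrder E] (d : X → X → E) : Prop where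
  nonneg : ∀ x y, 0 ≤ d x y
  eq_zero_iff : ∀ x y, d x y = 0 ↔ x = y
  symm : ∀ x y, d x y = d y x
  triangle : ∀ x y z, d x z ≤ d x y + d y z

section Convergence

variable {X E : Type*} [AddCommGroup E] [TopologicalSpace E] {C : Set E} {d : X → X → E}
  {x y : ℕ → X} {l l' : X}

theorem ConeConv.comp_add_one (h : ConeConv C d x l) : ConeConv C d (fun n => x (n + 1)) l := by
  intro c hc
  obtain ⟨N, hN⟩ := h c hc
  exact ⟨N, fun n hn => hN (n + 1) (by lia)⟩

theorem exists_mem_coneConv_of_subset {S T : Set X} (hST : S ⊆ T)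
    (hcomplete : ConeSubsetComplete C d T ∨ ConeSubsetComplete C d S) (hx : ∀ n, x n ∈ S)
    (hcauchy : ConeCauchy C d x) : ∃ l ∈ T, ConeConv C d x l := by
  rcases hcomplete with hT | hS
  · exact hT x (fun n => hST (hx n)) hcauchy
  · obtain ⟨l, hl, hconv⟩ := hS x hx hcauchy
    exact ⟨l, hST hl, hconv⟩

variable [PartialOrder E] [IsOrderedAddMonoid E] [IsTopologicalAddGroup E]

theorem ConeConv.of_dist_le (h : ConeConv (Ici 0) d x l) (hle : ∀ n, d (y n) l' ≤ d (x n) l) :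
    ConeConv (Ici 0) d y l' := by
  intro c hc
  obtain ⟨N, hN⟩ := h c hc
  exact ⟨N, fun n hn =>
    (isUpperSet_Ici 0).interior (sub_le_sub_left (hle n) c) (hN n hn)⟩

theorem IsConeMetric_s14.coneCauchy_of_le_of_tendsto_zero (hd : IsConeMetric_s14 d) {b : ℕ → E}
    (hb : Tendsto b atTop (𝓝 0)) (hle : ∀ n k, d (x n) (x (n + k)) ≤ b n) :
    ConeCauchy (Ici 0) d x := by
  intro c hc
  have hlim : Tendsto (fun n => c - b n) atTop (𝓝 c) := by simpa using hb.const_sub c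
  obtain ⟨N, hN⟩ := eventually_atTop.1 (hlim (isOpen_interior.mem_nhds hc))
  have hforward : ∀ m ≥ N, ∀ k, c - d (x m) (x (m + k)) ∈ interior (Ici 0) := fun m hm k =>
    (isUpperSet_Ici 0).interior (sub_le_sub_left (hle m k) c) (hN m hm)
  refine ⟨N, fun m hm n hn => ?_⟩
  rcases le_total m n with hmn | hnm
  · obtain ⟨k, rfl⟩ := Nat.exists_eq_add_of_le hmn
    exact hforward m hm k
  · obtain ⟨k, rfl⟩ := Nat.exists_eq_add_of_le hnm
    rw [hd.symm]
    exact hforward n hn k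

end Convergence

namespace IsConeMetric_s14

variable {X E : Type*} [AddCommGroup E] [PartialOrder E] [IsOrderedAddMonoid E] [Module ℝ E]
  [PosSMulMono ℝ E] {d : X → X → E} {y : ℕ → X} {lam : ℝ}

theorem dist_le_inv_smul_of_le_smul (hd : IsConeMetric_s14 d) (hlam₁ : lam < 1)
    (hstep : ∀ n, d (y (n + 1)) (y (n + 2)) ≤ lam • d (y n) (y (n + 1))) (n k : ℕ) :
    d (y n) (y (n + k)) ≤ (1 - lam)⁻¹ • d (y n) (y (n + 1)) := by
  have hpos : 0 < 1 - lam := sub_pos.2 hlam₁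
  induction k generalizing n with
  | zero =>
    rw [add_zero, (hd.eq_zero_iff _ _).2 rfl]
    exact smul_nonneg (inv_nonneg.2 hpos.le) (hd.nonneg _ _)
  | succ k ih =>
    have hgeom : 1 + (1 - lam)⁻¹ * lam = (1 - lam)⁻¹ := by
      field_simp
      ring
    calc d (y n) (y (n + (k + 1)))
        ≤ d (y n) (y (n + 1)) + d (y (n + 1)) (y (n + 1 + k)) := by
          rw [← add_assoc, add_right_comm]
          exact hd.triangle _ _ _
      _ ≤ d (y n) (y (n + 1)) + (1 - lam)⁻¹ • d (y (n + 1)) (y (n + 2)) := by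
          gcongr
          exact ih (n + 1)
      _ ≤ d (y n) (y (n + 1)) + (1 - lam)⁻¹ • lam • d (y n) (y (n + 1)) := by
          gcongr
          exact hstep n
      _ = (1 + (1 - lam)⁻¹ * lam) • d (y n) (y (n + 1)) := by module
      _ = (1 - lam)⁻¹ • d (y n) (y (n + 1)) := by rw [hgeom]

variable [TopologicalSpace E] [IsTopologicalAddGroup E] [ContinuousSMul ℝ E]

theorem coneCauchy_of_le_smul (hd : IsConeMetric_s14 d) (hlam₀ : 0 ≤ lam) (hlam₁ : lam < 1)
    (hstep : ∀ n, d (y (n + 1)) (y (n + 2)) ≤ lam • d (y n) (y (n + 1))) :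
    ConeCauchy (Ici 0) d y := by
  have hlim : Tendsto (fun n => (1 - lam)⁻¹ • lam ^ n • d (y 0) (y 1)) atTop (𝓝 0) := by
    simpa using
      ((tendsto_pow_atTop_nhds_zero_of_lt_one hlam₀ hlam₁).smul_const (d (y 0) (y 1))).const_smul
        (1 - lam)⁻¹
  refine hd.coneCauchy_of_le_of_tendsto_zero hlim fun n k => ?_
  calc d (y n) (y (n + k))
      ≤ (1 - lam)⁻¹ • d (y n) (y (n + 1)) := hd.dist_le_inv_smul_of_le_smul hlam₁ hstep n k
    _ ≤ (1 - lam)⁻¹ • lam ^ n • d (y 0) (y 1) :=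
        smul_le_smul_of_nonneg_left
          (le_pow_smul_of_succ_le_smul (a := fun n => d (y n) (y (n + 1))) hlam₀ hstep n)
          (inv_nonneg.2 (sub_nonneg.2 hlam₁.le))

theorem coneConv_unique [ClosedIciTopology E] (hd : IsConeMetric_s14 d)
    (hsolid : (interior (Ici (0 : E))).Nonempty) {l l' : X} (hl : ConeConv (Ici 0) d y l)
    (hl' : ConeConv (Ici 0) d y l') : l = l' := by
  rw [← hd.eq_zero_iff]
  refine (nonpos_of_forall_mem_interior_Ici_zero_le hsolid fun c hc => ?_).antisymm (hd.nonneg _ _)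
  have hhalf : (2⁻¹ : ℝ) • c ∈ interior (Ici (0 : E)) :=
    smul_mem_interior_Ici_zero (by positivity) hc
  obtain ⟨N, hN⟩ := hl _ hhalf
  obtain ⟨N', hN'⟩ := hl' _ hhalf
  have hdist : d (y (max N N')) l ≤ (2⁻¹ : ℝ) • c :=
    sub_nonneg.1 (interior_subset (hN _ (le_max_left N N')))
  have hdist' : d (y (max N N')) l' ≤ (2⁻¹ : ℝ) • c :=
    sub_nonneg.1 (interior_subset (hN' _ (le_max_right N N')))
  calc d l l'
      ≤ d l (y (max N N')) + d (y (max N N')) l' := hd.triangle _ _ _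
    _ ≤ (2⁻¹ : ℝ) • c + (2⁻¹ : ℝ) • c := add_le_add (hd.symm l _ ▸ hdist) hdist'
    _ = c := by module

end IsConeMetric_s14

/-- `w` is a point of coincidence of `f` and `g`, that is, a common value of the two maps at a
common argument. -/
def IsPointOfCoincidence {Y X : Type*} (f g : Y → X) (w : X) : Prop :=
  ∃ x, f x = w ∧ g x = w

/-- Weak compatibility: the self-maps `f` and `g` commute at the points where they agree. -/
def WeaklyCompatible {X : Type*} (f g : X → X) : Prop :=
  ∀ x, f x = g x → f (g x) = g (f x)

theorem WeaklyCompatible.existsUnique_common_fixedPoint {X : Type*} {f g : X → X}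
    (hfg : WeaklyCompatible f g) (hw : ∃! w, IsPointOfCoincidence f g w) :
    ∃! z, f z = z ∧ g z = z := by
  obtain ⟨w, ⟨x, hfx, hgx⟩, hunique⟩ := hw
  have hcomm : f w = g w := by simpa only [hfx, hgx] using hfg x (hfx.trans hgx.symm)
  have hfw : f w = w := hunique _ ⟨w, rfl, hcomm.symm⟩
  exact ⟨w, ⟨hfw, hcomm.symm.trans hfw⟩, fun z hz => hunique z ⟨z, hz⟩⟩

theorem exists_seq_map_succ_eq {Y X : Type*} [Nonempty Y] {f g : Y → X}
    (hfg : range f ⊆ range g) : ∃ x : ℕ → Y, ∀ n, g (x (n + 1)) = f (x n) := by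
  choose next hnext using fun x => hfg (mem_range_self x)
  refine ⟨fun n => next^[n] (Classical.arbitrary Y), fun n => ?_⟩
  simp only [Function.iterate_succ_apply', hnext]

namespace IsConeMetric_s14

variable {X Y E : Type*} [AddCommGroup E] [PartialOrder E] [IsOrderedAddMonoid E] [Module ℝ E]
  [PosSMulMono ℝ E] {d : X → X → E} {f g : Y → X} {lam : ℝ}

theorem pointOfCoincidence_unique (hd : IsConeMetric_s14 d) (hlam₁ : lam < 1)
    (hcontr : ∀ x y, d (f x) (f y) ≤ lam • d (g x) (g y)) {w w' : X}
    (hw : IsPointOfCoincidence f g w) (hw' : IsPointOfCoincidence f g w') : w = w' := by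
  obtain ⟨x, hfx, hgx⟩ := hw
  obtain ⟨x', hfx', hgx'⟩ := hw'
  have hle : d w w' ≤ lam • d w w' := by simpa only [hfx, hgx, hfx', hgx'] using hcontr x x'
  exact (hd.eq_zero_iff w w').1 (eq_zero_of_le_smul_self hlam₁ (hd.nonneg w w') hle)

variable [TopologicalSpace E] [IsTopologicalAddGroup E] [ContinuousSMul ℝ E] [ClosedIciTopology E]
  [Nonempty Y]

theorem exists_pointOfCoincidence (hd : IsConeMetric_s14 d)
    (hsolid : (interior (Ici (0 : E))).Nonempty) (hfg : range f ⊆ range g)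
    (hcomplete : ConeSubsetComplete (Ici 0) d (range g) ∨ ConeSubsetComplete (Ici 0) d (range f))
    (hlam₀ : 0 ≤ lam) (hlam₁ : lam < 1)
    (hcontr : ∀ x y, d (f x) (f y) ≤ lam • d (g x) (g y)) :
    ∃ w, IsPointOfCoincidence f g w := by
  obtain ⟨x, hx⟩ := exists_seq_map_succ_eq hfg
  have hcauchy : ConeCauchy (Ici 0) d (fun n => f (x n)) := by
    refine hd.coneCauchy_of_le_smul hlam₀ hlam₁ fun n => ?_
    simpa only [hx] using hcontr (x (n + 1)) (x (n + 2))
  obtain ⟨_, ⟨u, rfl⟩, hgu⟩ :=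
    exists_mem_coneConv_of_subset hfg hcomplete (fun n => mem_range_self (x n)) hcauchy
  have hfu : ConeConv (Ici 0) d (fun n => f (x (n + 1))) (f u) := by
    refine hgu.of_dist_le fun n => ?_
    calc d (f (x (n + 1))) (f u)
        ≤ lam • d (f (x n)) (g u) := hx n ▸ hcontr (x (n + 1)) u
      _ ≤ d (f (x n)) (g u) := smul_le_of_le_one_left (hd.nonneg _ _) hlam₁.le
  exact ⟨g u, u, hd.coneConv_unique hsolid hfu hgu.comp_add_one, rfl⟩

theorem existsUnique_pointOfCoincidence (hd : IsConeMetric_s14 d)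
    (hsolid : (interior (Ici (0 : E))).Nonempty) (hfg : range f ⊆ range g)
    (hcomplete : ConeSubsetComplete (Ici 0) d (range g) ∨ ConeSubsetComplete (Ici 0) d (range f))
    (hlam₀ : 0 ≤ lam) (hlam₁ : lam < 1)
    (hcontr : ∀ x y, d (f x) (f y) ≤ lam • d (g x) (g y)) :
    ∃! w, IsPointOfCoincidence f g w := by
  obtain ⟨w, hw⟩ := hd.exists_pointOfCoincidence hsolid hfg hcomplete hlam₀ hlam₁ hcontr
  exact ⟨w, hw, fun _ hw' => hd.pointOfCoincidence_unique hlam₁ hcontr hw' hw⟩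

end IsConeMetric_s14

theorem stmt_14 {X : Type*} [Nonempty X]
    {E : Type*} [AddCommGroup E] [Module ℝ E] [TopologicalSpace E]
    [IsTopologicalAddGroup E] [ContinuousSMul ℝ E]
    (C : Set E) (hC_closed : IsClosed C) (hC_ne : C ≠ {0})
    (hC_add : ∀ x ∈ C, ∀ y ∈ C, x + y ∈ C)
    (hC_smul : ∀ r : ℝ, 0 ≤ r → ∀ x ∈ C, r • x ∈ C)
    (hC_pointed : C ∩ (-C) = {0})
    (hSolid : (interior C).Nonempty)
    (d : X → X → E)
    (hd_pos : ∀ x y : X, d x y ∈ C)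
    (hd_eq : ∀ x y : X, d x y = 0 ↔ x = y)
    (hd_symm : ∀ x y : X, d x y = d y x)
    (hd_tri : ∀ x y z : X, d x y + d y z - d x z ∈ C)
    (f g : X → X) (hfg : Set.range f ⊆ Set.range g)
    (hcomplete : ConeSubsetComplete C d (Set.range g) ∨
      ConeSubsetComplete C d (Set.range f))
    (lam : ℝ) (hlam₀ : 0 < lam) (hlam₁ : lam < 1)
    (hcontr : ∀ x y : X, lam • d (g x) (g y) - d (f x) (f y) ∈ C) :
    (∃! w : X, ∃ x : X, f x = w ∧ g x = w) ∧
    ((∀ x : X, f x = g x → f (g x) = g (f x)) →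
      ∃! z : X, f z = z ∧ g z = z) := by
  let K : PointedCone ℝ E :=
    { carrier := C
      add_mem' := fun {x y} hx hy => hC_add x hx y hy
      zero_mem' := (hC_pointed.ge rfl).1
      smul_mem' := fun r x hx => hC_smul r r.2 x hx }
  have hsalient : (K : ConvexCone ℝ E).Salient := K.salient_iff_inter_neg_eq_singleton.2 hC_pointed
  obtain ⟨_, _, _, _, hK⟩ := exists_partialOrder_coe_eq_Ici_zero K hC_closed hsalient
  obtain rfl : C = Set.Ici 0 := hK
  have hd : IsConeMetric_s14 d :=
    ⟨hd_pos, hd_eq, hd_symm, fun x y z => sub_nonneg.1 (hd_tri x y z)⟩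
  have hw : ∃! w, IsPointOfCoincidence f g w :=
    hd.existsUnique_pointOfCoincidence hSolid hfg hcomplete hlam₀.le hlam₁
      fun x y => sub_nonneg.1 (hcontr x y)
  exact ⟨hw, fun hcompat => WeaklyCompatible.existsUnique_common_fixedPoint hcompat hw⟩
end

section
/- Let (X,d) be a complete cone metric space over a real topological vector space E with a solid cone C, and let f : X → X be a mapping such that there exists λ ∈ (0,1) with the property: for all x, y ∈ X there exists u(x,y) ∈ {d(x,y), d(x,fx), d(y,fy), d(x,fy), d(y,fx)} satisfying d(fx,fy) ⪯ λ·u(x,y). Then f has a unique fixed point in X. -/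
open Filter Topology

/-!
Let `e` be an interior point of the cone `C` and let `gauge (e - C)` be the Minkowski functional of
the neighbourhood `e - C` of the origin. It is sublinear and monotone for the order of `C`, so
composing it with a cone metric gives a real metric with the same convergent and the same Cauchy
sequences, and a quasicontraction stays one. This reduces the theorem to Ćirić's fixed point theorem
in a complete metric space. There, a quasicontraction shrinks the diameter of every bounded
invariant set by the factor `q < 1`, and orbits are bounded, since the diameter `δ` of any initial
segment of the orbit of `x` satisfies `δ ≤ dist x (f x) + q * δ`.
-/

open Function Bornology Set Metric

section Quasicontraction

/-- Ćirić's quasicontractions with constant `q`. The five distances are listed instead of being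
combined into a maximum, so that the definition parallels the one for cone metrics, where maxima
need not exist. -/
def IsQuasicontraction {X : Type*} [PseudoMetricSpace X] (q : ℝ) (f : X → X) : Prop :=
  ∀ x y, ∃ r ∈ ({dist x y, dist x (f x), dist y (f y), dist x (f y), dist y (f x)} : Set ℝ),
    dist (f x) (f y) ≤ q * r

namespace IsQuasicontraction

section PseudoMetricSpace

variable {X : Type*} [PseudoMetricSpace X] {q : ℝ} {f : X → X}

theorem dist_map_le_mul (hf : IsQuasicontraction q f) (hq : 0 ≤ q) {x y : X} {B : ℝ}
    (hxy : dist x y ≤ B) (hx : dist x (f x) ≤ B) (hy : dist y (f y) ≤ B)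
    (hxfy : dist x (f y) ≤ B) (hyfx : dist y (f x) ≤ B) : dist (f x) (f y) ≤ q * B := by
  obtain ⟨r, hr, hle⟩ := hf x y
  have hrB : r ≤ B := by rcases hr with rfl | rfl | rfl | rfl | rfl <;> assumption
  exact hle.trans (mul_le_mul_of_nonneg_left hrB hq)

theorem dist_map_le_mul_diam (hf : IsQuasicontraction q f) (hq : 0 ≤ q) {s : Set X}
    (hs : IsBounded s) {x y : X} (hx : x ∈ s) (hy : y ∈ s) (hfx : f x ∈ s) (hfy : f y ∈ s) :
    dist (f x) (f y) ≤ q * diam s :=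
  hf.dist_map_le_mul hq (dist_le_diam_of_mem hs hx hy) (dist_le_diam_of_mem hs hx hfx)
    (dist_le_diam_of_mem hs hy hfy) (dist_le_diam_of_mem hs hx hfy) (dist_le_diam_of_mem hs hy hfx)

theorem diam_image_le (hf : IsQuasicontraction q f) (hq : 0 ≤ q) {s : Set X}
    (hs : IsBounded s) (hmaps : MapsTo f s s) : diam (f '' s) ≤ q * diam s := by
  refine diam_le_of_forall_dist_le (mul_nonneg hq diam_nonneg) ?_
  rintro _ ⟨x, hx, rfl⟩ _ ⟨y, hy, rfl⟩
  exact hf.dist_map_le_mul_diam hq hs hx hy (hmaps hx) (hmaps hy)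

theorem diam_iterate_image_le (hf : IsQuasicontraction q f) (hq : 0 ≤ q) {s : Set X}
    (hs : IsBounded s) (hmaps : MapsTo f s s) (n : ℕ) :
    diam (f^[n] '' s) ≤ q ^ n * diam s := by
  induction n with
  | zero => simp
  | succ n ih =>
    have hbdd : IsBounded (f^[n] '' s) := hs.subset (hmaps.iterate n).image_subset
    have hinv : MapsTo f (f^[n] '' s) (f^[n] '' s) := by
      rintro _ ⟨x, hx, rfl⟩
      exact ⟨f x, hmaps hx, (Commute.self_iterate f n x).symm⟩
    calc diam (f^[n + 1] '' s) = diam (f '' (f^[n] '' s)) := by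
          rw [iterate_succ', image_comp]
      _ ≤ q * diam (f^[n] '' s) := hf.diam_image_le hq hbdd hinv
      _ ≤ q * (q ^ n * diam s) := mul_le_mul_of_nonneg_left ih hq
      _ = q ^ (n + 1) * diam s := by ring

theorem diam_image_iterate_Iic_le (hf : IsQuasicontraction q f) (hq : 0 ≤ q) (x : X) (n : ℕ) :
    diam ((f^[·] x) '' Iic n) ≤ dist x (f x) + q * diam ((f^[·] x) '' Iic n) := by
  set s := (f^[·] x) '' Iic n
  have mem_s {i : ℕ} (hi : i ≤ n) : f^[i] x ∈ s := mem_image_of_mem _ hi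
  have dist_succ_succ {i j : ℕ} (hi : i + 1 ≤ n) (hj : j + 1 ≤ n) :
      dist (f^[i + 1] x) (f^[j + 1] x) ≤ q * diam s := by
    have hfi := mem_s hi
    have hfj := mem_s hj
    rw [iterate_succ_apply'] at hfi hfj ⊢
    rw [iterate_succ_apply']
    exact hf.dist_map_le_mul_diam hq ((finite_Iic n).image _).isBounded
      (mem_s (by lia)) (mem_s (by lia)) hfi hfj
  have dist_zero_succ {j : ℕ} (hj : j + 1 ≤ n) :
      dist x (f^[j + 1] x) ≤ dist x (f x) + q * diam s :=
    (dist_triangle x (f x) _).trans (by gcongr; exact dist_succ_succ (i := 0) (by lia) hj)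
  have bound_nonneg : 0 ≤ dist x (f x) + q * diam s :=
    add_nonneg dist_nonneg (mul_nonneg hq diam_nonneg)
  refine diam_le_of_forall_dist_le bound_nonneg ?_
  rintro _ ⟨i, hi, rfl⟩ _ ⟨j, hj, rfl⟩
  rcases i with _ | i <;> rcases j with _ | j
  · simpa using bound_nonneg
  · exact dist_zero_succ hj
  · rw [dist_comm]
    exact dist_zero_succ hi
  · exact (dist_succ_succ hi hj).trans (le_add_of_nonneg_left dist_nonneg)

theorem isBounded_range_iterate (hf : IsQuasicontraction q f) (hq : 0 ≤ q) (hq1 : q < 1) (x : X) :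
    IsBounded (range (f^[·] x)) := by
  refine isBounded_range_iff.2 ⟨dist x (f x) / (1 - q), fun i j ↦ ?_⟩
  set s := (f^[·] x) '' Iic (max i j)
  have hdist : dist (f^[i] x) (f^[j] x) ≤ diam s :=
    dist_le_diam_of_mem ((finite_Iic _).image _).isBounded
      (mem_image_of_mem _ (le_max_left i j)) (mem_image_of_mem _ (le_max_right i j))
  have hdiam : diam s ≤ dist x (f x) + q * diam s := hf.diam_image_iterate_Iic_le hq x _
  have hmul : diam s * (1 - q) ≤ dist x (f x) := by linarith
  rw [le_div_iff₀ (sub_pos.2 hq1)]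
  exact (mul_le_mul_of_nonneg_right hdist (sub_nonneg.2 hq1.le)).trans hmul

theorem cauchySeq_iterate (hf : IsQuasicontraction q f) (hq : 0 ≤ q) (hq1 : q < 1) (x : X) :
    CauchySeq (f^[·] x) := by
  set orbit := range (f^[·] x)
  have hbdd : IsBounded orbit := hf.isBounded_range_iterate hq hq1 x
  have hmaps : MapsTo f orbit orbit := by
    rintro _ ⟨n, rfl⟩
    exact ⟨n + 1, iterate_succ_apply' f n x⟩
  have mem_tail {n N : ℕ} (h : N ≤ n) : f^[n] x ∈ f^[N] '' orbit :=
    ⟨f^[n - N] x, mem_range_self _, by rw [← iterate_add_apply, Nat.add_sub_cancel' h]⟩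
  refine cauchySeq_of_le_tendsto_0 (fun N ↦ q ^ N * diam orbit) (fun n m N hn hm ↦ ?_) ?_
  · exact (dist_le_diam_of_mem (hbdd.subset (hmaps.iterate N).image_subset)
      (mem_tail hn) (mem_tail hm)).trans (hf.diam_iterate_image_le hq hbdd hmaps N)
  · simpa using (tendsto_pow_atTop_nhds_zero_of_lt_one hq hq1).mul_const (diam orbit)

end PseudoMetricSpace

section MetricSpace

variable {X : Type*} [MetricSpace X] {q : ℝ} {f : X → X}

theorem isFixedPt_of_tendsto (hf : IsQuasicontraction q f) (hq : 0 ≤ q) (hq1 : q < 1)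
    {ι : Type*} {l : Filter ι} [l.NeBot] {u : ι → X} {z : X}
    (hu : Tendsto u l (𝓝 z)) (hfu : Tendsto (f ∘ u) l (𝓝 z)) : IsFixedPt f z := by
  have hbound (i : ι) :
      dist (f (u i)) (f z) ≤ q * (dist (u i) z + dist (f (u i)) z + dist z (f z)) := by
    have := dist_triangle_right (u i) (f (u i)) z
    have := dist_triangle (u i) z (f z)
    have := dist_comm z (f (u i))
    have := dist_nonneg (x := u i) (y := z)
    have := dist_nonneg (x := f (u i)) (y := z)
    have := dist_nonneg (x := z) (y := f z)
    exact hf.dist_map_le_mul hq (by linarith) (by linarith) (by linarith) (by linarith)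
      (by linarith)
  have hlim : dist z (f z) ≤ q * (0 + 0 + dist z (f z)) :=
    le_of_tendsto_of_tendsto' (hfu.dist tendsto_const_nhds)
      ((((tendsto_iff_dist_tendsto_zero.1 hu).add
        (tendsto_iff_dist_tendsto_zero.1 hfu)).add_const _).const_mul q) hbound
  have hzero : dist z (f z) ≤ 0 := by nlinarith
  exact (dist_le_zero.1 hzero).symm

theorem eq_of_isFixedPt (hf : IsQuasicontraction q f) (hq : 0 ≤ q) (hq1 : q < 1) {x y : X}
    (hx : IsFixedPt f x) (hy : IsFixedPt f y) : x = y := by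
  have hle : dist x y ≤ q * dist x y := by
    have h := hf.dist_map_le_mul (x := x) (y := y) (B := dist x y) hq
    simp only [hx.eq, hy.eq, dist_self, dist_comm y x, le_refl, dist_nonneg, forall_const] at h
    exact h
  have hzero : dist x y ≤ 0 := by nlinarith
  exact dist_le_zero.1 hzero

theorem existsUnique_isFixedPt [CompleteSpace X] [Nonempty X] (hf : IsQuasicontraction q f)
    (hq : 0 ≤ q) (hq1 : q < 1) : ∃! z, IsFixedPt f z := by
  obtain ⟨x⟩ := ‹Nonempty X›
  obtain ⟨z, hz⟩ := cauchySeq_tendsto_of_complete (hf.cauchySeq_iterate hq hq1 x)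
  have hfz : Tendsto (f ∘ (f^[·] x)) atTop (𝓝 z) := by
    simpa only [comp_def, iterate_succ_apply'] using (tendsto_add_atTop_iff_nat 1).2 hz
  have hfix : IsFixedPt f z := hf.isFixedPt_of_tendsto hq hq1 hz hfz
  exact ⟨z, hfix, fun y hy ↦ hf.eq_of_isFixedPt hq hq1 hy hfix⟩

end MetricSpace

end IsQuasicontraction

end Quasicontraction

section OrderUnitGauge

theorem convex_setOf_sub_mem {E : Type*} [AddCommGroup E] [Module ℝ E] {s : Set E}
    (hs : Convex ℝ s) (e : E) : Convex ℝ {w | e - w ∈ s} := by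
  intro x hx y hy a b ha hb hab
  have hcomb : e - (a • x + b • y) = a • (e - x) + b • (e - y) := by
    rw [smul_sub, smul_sub, sub_add_sub_comm, ← add_smul, hab, one_smul]
  rw [mem_ofPred_eq, hcomb]
  exact hs hx hy ha hb hab

theorem setOf_sub_mem_mem_nhds_zero {E : Type*} [AddCommGroup E] [TopologicalSpace E]
    [IsTopologicalAddGroup E] {s : Set E} {e : E} (hs : s ∈ 𝓝 e) :
    {w | e - w ∈ s} ∈ 𝓝 (0 : E) := by
  have htendsto : Tendsto (fun w : E ↦ e - w) (𝓝 0) (𝓝 e) := by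
    simpa using (tendsto_const_nhds (x := e)).sub (tendsto_id (x := 𝓝 (0 : E)))
  exact htendsto hs

variable {E : Type*} [AddCommGroup E] [Module ℝ E] [TopologicalSpace E]

section PointedCone

open scoped Pointwise

variable {C : PointedCone ℝ E} {a b : E}

theorem add_mem_interior_pointedCone [IsTopologicalAddGroup E] (ha : a ∈ interior (C : Set E))
    (hb : b ∈ C) : a + b ∈ interior (C : Set E) := by
  have hsub : (C : Set E) + (C : Set E) ⊆ (C : Set E) :=
    add_subset_iff.2 fun _ hx _ hy ↦ C.add_mem hx hy
  exact interior_mono hsub (subset_interior_add_left (add_mem_add ha hb))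

theorem smul_mem_interior_pointedCone [ContinuousConstSMul ℝ E] {r : ℝ} (hr : 0 < r)
    (ha : a ∈ interior (C : Set E)) : r • a ∈ interior (C : Set E) := by
  have hsub : r • (C : Set E) ⊆ (C : Set E) := by
    rintro _ ⟨x, hx, rfl⟩
    exact C.smul_mem hr.le hx
  refine interior_mono hsub ?_
  rw [interior_smul₀ hr.ne']
  exact smul_mem_smul_set ha

end PointedCone

/-- The Minkowski functional of `e - C`. For `e` in the interior of `C` it sends `v` to the least
`r ≥ 0` with `v ⪯ r • e`, and it serves to turn cone metrics into real ones. -/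
noncomputable def orderUnitGauge (C : ProperCone ℝ E) (e v : E) : ℝ :=
  gauge {w | e - w ∈ (C : Set E)} v

variable {C : ProperCone ℝ E} {e u v : E}

theorem orderUnitGauge_nonneg : 0 ≤ orderUnitGauge C e v :=
  gauge_nonneg v

theorem orderUnitGauge_smul {r : ℝ} (hr : 0 ≤ r) :
    orderUnitGauge C e (r • v) = r * orderUnitGauge C e v :=
  gauge_smul_of_nonneg hr v

variable [IsTopologicalAddGroup E] [ContinuousSMul ℝ E]

theorem orderUnitGauge_add_le (he : e ∈ interior (C : Set E)) :
    orderUnitGauge C e (u + v) ≤ orderUnitGauge C e u + orderUnitGauge C e v :=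
  gauge_add_le (convex_setOf_sub_mem C.convex e)
    (absorbent_nhds_zero (setOf_sub_mem_mem_nhds_zero (mem_interior_iff_mem_nhds.1 he))) u v

theorem orderUnitGauge_le_iff_of_pos (he : e ∈ interior (C : Set E)) {r : ℝ} (hr : 0 < r) :
    orderUnitGauge C e v ≤ r ↔ r • e - v ∈ C := by
  have hscale : orderUnitGauge C e v = r * orderUnitGauge C e (r⁻¹ • v) := by
    rw [← orderUnitGauge_smul hr.le, smul_inv_smul₀ hr.ne']
  have hsub : r • e - v = r • (e - r⁻¹ • v) := by rw [smul_sub, smul_inv_smul₀ hr.ne']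
  have hclosed : IsClosed {w | e - w ∈ (C : Set E)} :=
    C.isClosed.preimage (continuous_const.sub continuous_id)
  rw [hscale, mul_le_iff_le_one_right hr, orderUnitGauge,
    gauge_le_one_iff_mem_closure (convex_setOf_sub_mem C.convex e)
      (setOf_sub_mem_mem_nhds_zero (mem_interior_iff_mem_nhds.1 he)),
    hclosed.closure_eq, mem_ofPred_eq, hsub]
  refine ⟨fun h ↦ C.smul_mem h hr.le, fun h ↦ ?_⟩
  rw [← inv_smul_smul₀ hr.ne' (e - r⁻¹ • v)]
  exact C.smul_mem h (inv_nonneg.2 hr.le)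

theorem smul_sub_mem_of_orderUnitGauge_le (he : e ∈ interior (C : Set E)) {r : ℝ}
    (h : orderUnitGauge C e v ≤ r) : r • e - v ∈ C := by
  have hcont : Tendsto (fun t : ℝ ↦ t • e - v) (𝓝[>] r) (𝓝 (r • e - v)) :=
    ((continuous_id.smul continuous_const).sub continuous_const).continuousWithinAt
  refine C.isClosed.mem_of_tendsto hcont (eventually_mem_nhdsWithin.mono fun t ht ↦ ?_)
  have hrt : r < t := ht
  exact (orderUnitGauge_le_iff_of_pos he ((orderUnitGauge_nonneg.trans h).trans_lt hrt)).1
    (h.trans hrt.le)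

theorem orderUnitGauge_mono (he : e ∈ interior (C : Set E)) (huv : v - u ∈ C) :
    orderUnitGauge C e u ≤ orderUnitGauge C e v := by
  refine le_of_forall_gt_imp_ge_of_dense fun r hr ↦ ?_
  refine (orderUnitGauge_le_iff_of_pos he (orderUnitGauge_nonneg.trans_lt hr)).2 ?_
  simpa only [sub_add_sub_cancel] using
    add_mem (smul_sub_mem_of_orderUnitGauge_le he hr.le) huv

theorem orderUnitGauge_eq_zero_iff (he : e ∈ interior (C : Set E))
    (hC : (C : ConvexCone ℝ E).Salient) (hv : v ∈ C) : orderUnitGauge C e v = 0 ↔ v = 0 := by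
  refine ⟨fun h ↦ ?_, fun h ↦ by rw [h, orderUnitGauge, gauge_zero]⟩
  have hneg : -v ∈ C := by simpa using smul_sub_mem_of_orderUnitGauge_le he h.le
  exact of_not_not fun hne ↦ hC v hv hne hneg

theorem tendsto_orderUnitGauge_zero_iff (he : e ∈ interior (C : Set E)) {ι : Type*}
    {l : Filter ι} {w : ι → E} :
    Tendsto (fun i ↦ orderUnitGauge C e (w i)) l (𝓝 0) ↔
      ∀ c ∈ interior (C : Set E), ∀ᶠ i in l, c - w i ∈ interior (C : Set E) := by
  constructor
  · intro h c hc
    have hcont : Tendsto (fun i ↦ c - orderUnitGauge C e (w i) • e) l (𝓝 c) := by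
      simpa using (tendsto_const_nhds (x := c)).sub (h.smul_const e)
    filter_upwards [hcont (isOpen_interior.mem_nhds hc)] with i hi
    have hw : orderUnitGauge C e (w i) • e - w i ∈ C := smul_sub_mem_of_orderUnitGauge_le he le_rfl
    rw [← sub_add_sub_cancel c (orderUnitGauge C e (w i) • e) (w i)]
    exact add_mem_interior_pointedCone (C := C.toPointedCone) hi hw
  · intro h
    refine nhds_basis_closedBall.tendsto_right_iff.2 fun r hr ↦ ?_
    have hre : r • e ∈ interior (C : Set E) :=
      smul_mem_interior_pointedCone (C := C.toPointedCone) hr he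
    filter_upwards [h _ hre] with i hi
    rw [mem_closedBall_zero_iff, Real.norm_of_nonneg orderUnitGauge_nonneg]
    exact (orderUnitGauge_le_iff_of_pos he hr).2 (interior_subset hi)

end OrderUnitGauge

section ConeMetric

/-- Cone metrics on `X` with values in `E`, for the order `x ⪯ y ↔ y - x ∈ C`. -/
structure IsConeMetric_s16 {X E : Type*} [AddCommGroup E] [Module ℝ E] [TopologicalSpace E]
    (C : ProperCone ℝ E) (d : X → X → E) : Prop where
  mem (x y : X) : d x y ∈ C
  eq_zero_iff (x y : X) : d x y = 0 ↔ x = y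
  symm (x y : X) : d x y = d y x
  triangle (x y z : X) : d x y + d y z - d x z ∈ C

namespace IsConeMetric_s16

variable {X E : Type*} [AddCommGroup E] [Module ℝ E] [TopologicalSpace E]
  [IsTopologicalAddGroup E] [ContinuousSMul ℝ E] {C : ProperCone ℝ E} {d : X → X → E} {e : E}

/-- The real metric `orderUnitGauge C e (d x y)`, which has the same convergent and the same Cauchy
sequences as the cone metric `d`. -/
noncomputable abbrev metricSpace (hd : IsConeMetric_s16 C d) (hC : (C : ConvexCone ℝ E).Salient)
    (he : e ∈ interior (C : Set E)) : MetricSpace X where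
  dist x y := orderUnitGauge C e (d x y)
  dist_self x := (orderUnitGauge_eq_zero_iff he hC (hd.mem x x)).2 ((hd.eq_zero_iff x x).2 rfl)
  dist_comm x y := by rw [hd.symm]
  dist_triangle x y z :=
    (orderUnitGauge_mono he (hd.triangle x y z)).trans (orderUnitGauge_add_le he)
  eq_of_dist_eq_zero {x y} h :=
    (hd.eq_zero_iff x y).1 ((orderUnitGauge_eq_zero_iff he hC (hd.mem x y)).1 h)

theorem tendsto_iff_coneConv (hd : IsConeMetric_s16 C d) (hC : (C : ConvexCone ℝ E).Salient)
    (he : e ∈ interior (C : Set E)) {x : ℕ → X} {z : X} :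
    letI := hd.metricSpace hC he
    Tendsto x atTop (𝓝 z) ↔ ConeConv C d x z := by
  let := hd.metricSpace hC he
  rw [tendsto_iff_dist_tendsto_zero]
  exact (tendsto_orderUnitGauge_zero_iff he).trans (forall₂_congr fun _ _ ↦ eventually_atTop)

theorem cauchySeq_iff_coneCauchy (hd : IsConeMetric_s16 C d) (hC : (C : ConvexCone ℝ E).Salient)
    (he : e ∈ interior (C : Set E)) {x : ℕ → X} :
    letI := hd.metricSpace hC he
    CauchySeq x ↔ ConeCauchy C d x := by
  let := hd.metricSpace hC he
  rw [cauchySeq_iff_tendsto_dist_atTop_0]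
  exact (tendsto_orderUnitGauge_zero_iff he).trans
    (forall₂_congr fun _ _ ↦ eventually_atTop_prod_self')

theorem completeSpace (hd : IsConeMetric_s16 C d) (hC : (C : ConvexCone ℝ E).Salient)
    (he : e ∈ interior (C : Set E))
    (hcomplete : ∀ x : ℕ → X, ConeCauchy C d x → ∃ z, ConeConv C d x z) :
    letI := hd.metricSpace hC he
    CompleteSpace X := by
  let := hd.metricSpace hC he
  refine Metric.complete_of_cauchySeq_tendsto fun x hx ↦ ?_
  obtain ⟨z, hz⟩ := hcomplete x ((hd.cauchySeq_iff_coneCauchy hC he).1 hx)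
  exact ⟨z, (hd.tendsto_iff_coneConv hC he).2 hz⟩

theorem isQuasicontraction (hd : IsConeMetric_s16 C d) (hC : (C : ConvexCone ℝ E).Salient)
    (he : e ∈ interior (C : Set E)) {f : X → X} {q : ℝ} (hq : 0 ≤ q)
    (hf : ∀ x y, ∃ u ∈ ({d x y, d x (f x), d y (f y), d x (f y), d y (f x)} : Set E),
      q • u - d (f x) (f y) ∈ C) :
    letI := hd.metricSpace hC he
    IsQuasicontraction q f := by
  let := hd.metricSpace hC he
  intro x y
  obtain ⟨u, hu, hle⟩ := hf x y
  have hmem := mem_image_of_mem (orderUnitGauge C e) hu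
  simp only [image_insert_eq, image_singleton] at hmem
  exact ⟨_, hmem, (orderUnitGauge_mono he hle).trans_eq (orderUnitGauge_smul hq)⟩

end IsConeMetric_s16

end ConeMetric

theorem stmt_16 {X : Type*} [Nonempty X]
    {E : Type*} [AddCommGroup E] [Module ℝ E] [TopologicalSpace E]
    [IsTopologicalAddGroup E] [ContinuousSMul ℝ E]
    (C : Set E) (hC_closed : IsClosed C) (hC_ne : C ≠ {0})
    (hC_add : ∀ x ∈ C, ∀ y ∈ C, x + y ∈ C)
    (hC_smul : ∀ r : ℝ, 0 ≤ r → ∀ x ∈ C, r • x ∈ C)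
    (hC_pointed : C ∩ (-C) = {0})
    (hSolid : (interior C).Nonempty)
    (d : X → X → E)
    (hd_pos : ∀ x y : X, d x y ∈ C)
    (hd_eq : ∀ x y : X, d x y = 0 ↔ x = y)
    (hd_symm : ∀ x y : X, d x y = d y x)
    (hd_tri : ∀ x y z : X, d x y + d y z - d x z ∈ C)
    (hcomplete : ∀ x : ℕ → X, ConeCauchy C d x → ∃ l : X, ConeConv C d x l)
    (f : X → X) (lam : ℝ) (hlam₀ : 0 < lam) (hlam₁ : lam < 1)
    (hcontr : ∀ x y : X,
      ∃ u ∈ ({d x y, d x (f x), d y (f y), d x (f y), d y (f x)} : Set E),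
        lam • u - d (f x) (f y) ∈ C) :
    ∃! z : X, f z = z := by
  obtain ⟨e, he⟩ := hSolid
  let K : ProperCone ℝ E :=
    { carrier := C
      add_mem' := fun {x y} hx hy ↦ hC_add x hx y hy
      zero_mem' := (hC_pointed.ge rfl).1
      smul_mem' := fun r x hx ↦ hC_smul r r.2 x hx
      isClosed' := hC_closed }
  have hK : (K : ConvexCone ℝ E).Salient :=
    K.toPointedCone.salient_iff_inter_neg_eq_singleton.2 hC_pointed
  have hd : IsConeMetric_s16 K d := ⟨hd_pos, hd_eq, hd_symm, hd_tri⟩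
  let := hd.metricSpace hK he
  have := hd.completeSpace hK he hcomplete
  exact (hd.isQuasicontraction hK he hlam₀.le hcontr).existsUnique_isFixedPt hlam₀.le hlam₁
end
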